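/- arXiv:2106.14576 — 2 statements merged into one kernel-verified Lean document; each statement's English description precedes it below -/
import Mathlib

section
/- Let u and w be minimizers of J in the open unit ball B₁, let 0 < ε < 1, and assume u(x) ≥ w(x) for all x ∈ ℝⁿ \ B_{1−ε}. Then u ≥ w everywhere on ℝⁿ. -/
open MeasureTheory Metric Set Filter ENNReal NNReal

/-- The Alt–Caffarelli energy `J_D(u) = ∫_D (‖∇u‖² + 𝟙_{u>0})`, valued in `[0,∞]`. -/
noncomputable def JE {n : ℕ} (D : Set (EuclideanSpace ℝ (Fin n)))
    (u : EuclideanSpace ℝ (Fin n) → ℝ) : ℝ≥0∞ :=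
  ∫⁻ x in D, ((‖gradient u x‖₊ : ℝ≥0∞) ^ 2 + if 0 < u x then 1 else 0)

/-- `u` is a (nonnegative, locally Lipschitz) minimizer of `J` in the open set `Ω`:
for every nonnegative locally Lipschitz competitor `v` with `{v ≠ u}` a bounded subset
of `Ω`, one has `J_{Ω ∩ B}(u) ≤ J_{Ω ∩ B}(v)` for every open ball `B ⊇ {v ≠ u}`. -/
def IsMinimizer {n : ℕ} (Ω : Set (EuclideanSpace ℝ (Fin n)))
    (u : EuclideanSpace ℝ (Fin n) → ℝ) : Prop :=
  (∀ x, 0 ≤ u x) ∧ LocallyLipschitz u ∧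
  ∀ v : EuclideanSpace ℝ (Fin n) → ℝ, (∀ x, 0 ≤ v x) → LocallyLipschitz v →
    Bornology.IsBounded {x | v x ≠ u x} → {x | v x ≠ u x} ⊆ Ω →
    ∀ (c : EuclideanSpace ℝ (Fin n)) (r : ℝ), {x | v x ≠ u x} ⊆ Metric.ball c r →
      JE (Ω ∩ Metric.ball c r) u ≤ JE (Ω ∩ Metric.ball c r) v

/-!
As `J(max(u,w)) + J(min(u,w)) = J(u) + J(w)` and `min(u,w)` is an admissible competitor for `w`, the
function `v = max(u,w)` is again a minimizer. Where positive, minimizers are weakly harmonic, so by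
the mean value property two ordered minimizers `u ≤ v` coincide near every point where they touch at
a positive value. Hence `u` vanishes on the boundary of `{u < v, u > 0}`, and replacing `u` by `0`
there is an admissible competitor, which saves energy unless this set is empty. Then `u = 0` on
`{u < v}`, so `v`, being positive there, costs strictly more than `u` unless `{u < v}` is empty.
-/

namespace AltCaffarelli

open scoped Gradient Topology RealInnerProductSpace Pointwise

section Topology

lemma inter_frontier_nonempty_of_isPreconnected {X : Type*} [TopologicalSpace X] {s t : Set X}
    (hs : IsPreconnected s) (hst : (s ∩ t).Nonempty) (hst' : (s ∩ tᶜ).Nonempty) :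
    (s ∩ frontier t).Nonempty := by
  by_contra hempty
  have hcover : ∀ x ∈ s, x ∈ interior t ∨ x ∈ (closure t)ᶜ := fun x hx => by
    by_contra! hx'
    exact hempty ⟨x, hx, not_not.1 hx'.2, hx'.1⟩
  obtain ⟨a, has, hat⟩ := hst
  obtain ⟨b, hbs, hbt⟩ := hst'
  obtain ⟨x, -, hxi, hxc⟩ := hs _ _ isOpen_interior isClosed_closure.isOpen_compl hcover
    ⟨a, has, (hcover a has).resolve_right (not_not_intro (subset_closure hat))⟩
    ⟨b, hbs, (hcover b hbs).resolve_left fun h => hbt (interior_subset h)⟩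
  exact hxc (subset_closure (interior_subset hxi))

lemma eventually_pos_add_const_mul_iff {X : Type*} [TopologicalSpace X] {u φ : X → ℝ}
    (hu : Continuous u) (hφ : Continuous φ) (hcomp : HasCompactSupport φ)
    (hpos : ∀ x ∈ tsupport φ, 0 < u x) :
    ∀ᶠ s : ℝ in 𝓝 0, ∀ x, 0 < u x + s * φ x ↔ 0 < u x := by
  have hcont : Continuous fun p : ℝ × X => u p.2 + p.1 * φ p.2 := by fun_prop
  have hsupp_pos : ∀ᶠ s : ℝ in 𝓝 0, ∀ x ∈ tsupport φ, 0 < u x + s * φ x :=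
    hcomp.isCompact.eventually_forall_of_forall_eventually fun x hx =>
      hcont.continuousAt.eventually_const_lt
        (by simpa only [zero_mul, add_zero] using hpos x hx)
  filter_upwards [hsupp_pos] with s hs x
  by_cases hx : x ∈ tsupport φ
  · exact iff_of_true (hs x hx) (hpos x hx)
  · simp only [image_eq_zero_of_notMem_tsupport hx, mul_zero, add_zero]

variable {E F : Type*} [SeminormedAddCommGroup E] [NormedSpace ℝ E] [SeminormedAddCommGroup F]
  {f : E → F} {s t : Set E}

lemma lipschitzOnWith_indicator {K : ℝ≥0} (ht : Convex ℝ t) (hf : LipschitzOnWith K f t)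
    (hs : ∀ x ∈ frontier s, f x = 0) : LipschitzOnWith K (s.indicator f) t := by
  have hcross : ∀ a ∈ t, ∀ b ∈ t, a ∈ s → b ∉ s → ‖f a‖ ≤ K * dist a b := by
    intro a ha b hb has hbs
    obtain ⟨z, hz, hzs⟩ := inter_frontier_nonempty_of_isPreconnected
      (convex_segment (𝕜 := ℝ) a b).isPreconnected
      ⟨a, left_mem_segment ℝ a b, has⟩ ⟨b, right_mem_segment ℝ a b, hbs⟩
    calc ‖f a‖ = dist (f a) (f z) := by rw [hs z hzs, dist_zero_right]
      _ ≤ K * dist a z := hf.dist_le_mul a ha z (ht.segment_subset ha hb hz)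
      _ ≤ K * dist a b := by
        gcongr
        linarith [dist_add_dist_of_mem_segment hz, dist_nonneg (x := z) (y := b)]
  refine LipschitzOnWith.of_dist_le_mul fun a ha b hb => ?_
  by_cases has : a ∈ s <;> by_cases hbs : b ∈ s
  · simpa only [indicator_of_mem has, indicator_of_mem hbs] using hf.dist_le_mul a ha b hb
  · simpa only [indicator_of_mem has, indicator_of_notMem hbs, dist_zero_right]
      using hcross a ha b hb has hbs
  · simpa only [indicator_of_notMem has, indicator_of_mem hbs, dist_zero_left, dist_comm a b]
      using hcross b hb a ha hbs has
  · rw [indicator_of_notMem has, indicator_of_notMem hbs, dist_self]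
    positivity

lemma locallyLipschitz_indicator (hf : LocallyLipschitz f) (hs : ∀ x ∈ frontier s, f x = 0) :
    LocallyLipschitz (s.indicator f) := by
  intro x
  obtain ⟨K, t, ht, hK⟩ := hf x
  obtain ⟨r, hr, hrt⟩ := Metric.mem_nhds_iff.1 ht
  exact ⟨K, ball x r, ball_mem_nhds x hr,
    lipschitzOnWith_indicator (convex_ball x r) (hK.mono hrt) hs⟩

lemma exists_lipschitzOnWith_comp_add_smul (hf : LocallyLipschitz f) (x₀ : E) {I : Set ℝ}
    (hI : IsCompact I) (hs : IsCompact s) :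
    ∃ K, ∀ x ∈ s, LipschitzOnWith K (fun t => f (x₀ + t • x)) I := by
  obtain ⟨R, hR⟩ := hs.isBounded.exists_norm_le
  obtain ⟨K, hK⟩ := hf.locallyLipschitzOn.exists_lipschitzOnWith_of_compact
    ((hI.prod hs).image (by fun_prop : Continuous fun p : ℝ × E => x₀ + p.1 • p.2))
  refine ⟨K * R.toNNReal, fun x hx => .of_dist_le_mul fun a ha b hb => ?_⟩
  calc dist (f (x₀ + a • x)) (f (x₀ + b • x))
      ≤ K * dist (x₀ + a • x) (x₀ + b • x) :=
        hK.dist_le_mul _ (mem_image_of_mem _ (mk_mem_prod ha hx)) _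
          (mem_image_of_mem _ (mk_mem_prod hb hx))
    _ = K * (dist a b * ‖x‖) := by
        rw [dist_add_left, dist_eq_norm, ← sub_smul, norm_smul, ← dist_eq_norm]
    _ ≤ K * (dist a b * R.toNNReal) := by
        gcongr
        exact (hR x hx).trans (Real.le_coe_toNNReal R)
    _ = ↑(K * R.toNNReal) * dist a b := by
        rw [NNReal.coe_mul]
        ring

end Topology

section AddHaar

variable {E F : Type*} [NormedAddCommGroup E] [NormedSpace ℝ E] [FiniteDimensional ℝ E]
  [MeasurableSpace E] [BorelSpace E] [NormedAddCommGroup F] [NormedSpace ℝ F]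
  [FiniteDimensional ℝ F] (μ : Measure E) [μ.IsAddHaarMeasure]

lemma ae_differentiableAt_of_locallyLipschitz {f : E → F} (hf : LocallyLipschitz f) :
    ∀ᵐ x ∂μ, DifferentiableAt ℝ f x := by
  have hball : ∀ N : ℕ, ∀ᵐ x ∂μ, x ∈ ball (0 : E) N → DifferentiableAt ℝ f x := fun N => by
    obtain ⟨K, hK⟩ := hf.locallyLipschitzOn.exists_lipschitzOnWith_of_compact
      (isCompact_closedBall (0 : E) N)
    filter_upwards [(hK.mono ball_subset_closedBall).ae_differentiableWithinAt_of_mem (μ := μ)]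
      with x hx hxN
    exact (hx hxN).differentiableAt (isOpen_ball.mem_nhds hxN)
  filter_upwards [ae_all_iff.2 hball] with x hx
  obtain ⟨N, hN⟩ := exists_nat_gt ‖x‖
  exact hx N (mem_ball_zero_iff.2 hN)

lemma ball_ae_eq_closedBall (x₀ : E) {r : ℝ} (hr : r ≠ 0) :
    ball x₀ r =ᵐ[μ] closedBall x₀ r := by
  rw [← ball_union_sphere]
  exact (union_ae_eq_left_of_ae_eq_empty
    (ae_eq_empty.2 (Measure.addHaar_sphere_of_ne_zero μ x₀ hr))).symm

lemma setIntegral_comp_add_smul (f : E → ℝ) (x₀ : E) {r : ℝ} (hr : 0 < r) (s : Set E) :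
    ∫ x in s, f (x₀ + r • x) ∂μ =
      (r ^ Module.finrank ℝ E)⁻¹ * ∫ y in x₀ +ᵥ r • s, f y ∂μ := by
  rw [Measure.setIntegral_comp_smul_of_pos μ (fun y => f (x₀ + y)) s hr, smul_eq_mul]
  congr 1
  exact ((measurePreserving_add_left μ x₀).setIntegral_image_emb
    (measurableEmbedding_addLeft x₀) f (r • s)).symm

end AddHaar

section Gradient

variable {E : Type*} [NormedAddCommGroup E] [InnerProductSpace ℝ E] [CompleteSpace E]
  {f g : E → ℝ} {x : E}

lemma norm_gradient (f : E → ℝ) (x : E) : ‖∇ f x‖ = ‖fderiv ℝ f x‖ :=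
  LinearIsometryEquiv.norm_map _ _

lemma gradient_eq_zero_of_isLocalMin (h : IsLocalMin f x) : ∇ f x = 0 := by
  simp only [gradient, h.fderiv_eq_zero, map_zero]

lemma gradient_eq_of_le_of_eq (hle : ∀ y, f y ≤ g y) (hx : f x = g x)
    (hf : DifferentiableAt ℝ f x) (hg : DifferentiableAt ℝ g x) : ∇ f x = ∇ g x := by
  have hmin : IsLocalMin (g - f) x := .of_forall fun y => by
    simpa only [Pi.sub_apply, hx, sub_self, sub_nonneg] using hle y
  have hzero := hmin.fderiv_eq_zero
  rw [fderiv_sub hg hf, sub_eq_zero] at hzero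
  simp only [gradient, hzero]

lemma gradient_add_const_mul (hf : DifferentiableAt ℝ f x) (hg : DifferentiableAt ℝ g x) (s : ℝ) :
    ∇ (fun y => f y + s * g y) x = ∇ f x + s • ∇ g x := by
  simp only [gradient, fderiv_fun_add hf (hg.const_mul s), fderiv_const_mul hg, map_add, map_smul]

lemma gradient_of_notMem_tsupport (h : x ∉ tsupport f) : ∇ f x = 0 := by
  simp only [gradient, fderiv_of_notMem_tsupport ℝ h, map_zero]

lemma isBoundedUnder_norm_gradient (hf : LocallyLipschitz f) (x : E) :
    (𝓝 x).IsBoundedUnder (· ≤ ·) fun y => ‖∇ f y‖ := by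
  obtain ⟨K, t, ht, hK⟩ := hf x
  refine isBoundedUnder_of_eventually_le (a := (K : ℝ)) ?_
  filter_upwards [eventually_mem_nhds_iff.2 ht] with y hy
  rw [norm_gradient]
  exact norm_fderiv_le_of_lipschitzOn ℝ hy hK

variable [MeasurableSpace E] [BorelSpace E]

lemma measurable_gradient (f : E → ℝ) : Measurable (∇ f) :=
  (LinearIsometryEquiv.continuous _).measurable.comp (measurable_fderiv ℝ f)

variable (μ : Measure E) [IsLocallyFiniteMeasure μ]

lemma locallyIntegrable_inner_gradient [SecondCountableTopology E] (hf : LocallyLipschitz f)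
    (hg : LocallyLipschitz g) : LocallyIntegrable (fun x => ⟪∇ f x, ∇ g x⟫) μ := fun x => by
  refine (μ.finiteAt_nhds x).integrableAtFilter
    ((measurable_gradient f).inner
      (measurable_gradient g)).stronglyMeasurable.stronglyMeasurableAtFilter ?_
  obtain ⟨A, hA⟩ := (isBoundedUnder_norm_gradient hf x).eventually_le
  obtain ⟨B, hB⟩ := (isBoundedUnder_norm_gradient hg x).eventually_le
  refine isBoundedUnder_of_eventually_le (a := A * B) ?_
  filter_upwards [hA, hB] with y hAy hBy
  exact (norm_inner_le_norm _ _).trans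
    (mul_le_mul hAy hBy (norm_nonneg _) ((norm_nonneg _).trans hAy))

end Gradient

section Energy

variable {E : Type*} [NormedAddCommGroup E] [InnerProductSpace ℝ E]
  {D : Set E} {f g u w φ : E → ℝ}

section Density

variable [CompleteSpace E]

/-- The integrand `‖∇u‖² + 𝟙_{u>0}` of the Alt–Caffarelli functional, as a real number. -/
noncomputable def energyDensity (u : E → ℝ) (x : E) : ℝ :=
  ‖∇ u x‖ ^ 2 + if 0 < u x then 1 else 0

lemma energyDensity_nonneg (u : E → ℝ) (x : E) : 0 ≤ energyDensity u x := by
  unfold energyDensity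
  positivity

lemma energyDensity_congr {x : E} (h : f =ᶠ[𝓝 x] g) : energyDensity f x = energyDensity g x := by
  simp only [energyDensity, h.gradient_eq, h.eq_of_nhds]

lemma energyDensity_eq_zero {x : E} (hu : ∀ y, 0 ≤ u y) (hx : u x = 0) :
    energyDensity u x = 0 := by
  have hmin : IsLocalMin u x := .of_forall fun y => hx ▸ hu y
  simp [energyDensity, gradient_eq_zero_of_isLocalMin hmin, hx]

lemma energyDensity_eq_of_le_of_eq {x : E} (hle : ∀ y, f y ≤ g y) (hx : f x = g x)
    (hf : DifferentiableAt ℝ f x) (hg : DifferentiableAt ℝ g x) :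
    energyDensity f x = energyDensity g x := by
  simp only [energyDensity, gradient_eq_of_le_of_eq hle hx hf hg, hx]

end Density

variable [FiniteDimensional ℝ E] [MeasurableSpace E] [BorelSpace E]

lemma locallyIntegrable_energyDensity (hu : LocallyLipschitz u) :
    LocallyIntegrable (energyDensity u) := by
  have hpos : LocallyIntegrable ({x | 0 < u x}.indicator fun _ => (1 : ℝ)) :=
    (locallyIntegrable_const 1).indicator
      (isOpen_lt continuous_const hu.continuous).measurableSet
  have hsum : energyDensity u =
      (fun x => ⟪∇ u x, ∇ u x⟫) + {x | 0 < u x}.indicator fun _ => (1 : ℝ) := by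
    ext x
    simp only [energyDensity, Pi.add_apply, real_inner_self_eq_norm_sq, indicator_apply,
      mem_ofPred_eq]
  rw [hsum]
  exact (locallyIntegrable_inner_gradient volume hu hu).add hpos

lemma integrableOn_of_locallyIntegrable_of_isBounded (hf : LocallyIntegrable f)
    (hD : Bornology.IsBounded D) : IntegrableOn f D :=
  (hf.integrableOn_isCompact hD.isCompact_closure).mono_set subset_closure

lemma integrableOn_energyDensity (hu : LocallyLipschitz u) (hD : Bornology.IsBounded D) :
    IntegrableOn (energyDensity u) D :=
  integrableOn_of_locallyIntegrable_of_isBounded (locallyIntegrable_energyDensity hu) hD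

/-- The Alt–Caffarelli energy as a Bochner integral, so that energies can be subtracted. It is the
junk value `0` when the density is not integrable, hence is only used for locally Lipschitz `u` and
bounded `D`. -/
noncomputable def energy (D : Set E) (u : E → ℝ) : ℝ := ∫ x in D, energyDensity u x

lemma energy_nonneg (D : Set E) (u : E → ℝ) : 0 ≤ energy D u :=
  integral_nonneg (energyDensity_nonneg u)

lemma energyDensity_max_add_energyDensity_min (hu : LocallyLipschitz u)
    (hw : LocallyLipschitz w) :
    ∀ᵐ x, energyDensity (fun y => max (u y) (w y)) x + energyDensity (fun y => min (u y) (w y)) x =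
      energyDensity u x + energyDensity w x := by
  have hlt : ∀ {f g : E → ℝ}, LocallyLipschitz f → LocallyLipschitz g → ∀ {x}, f x < g x →
      ∀ᶠ y in 𝓝 x, f y < g y := fun hf hg _ h =>
    hf.continuous.continuousAt.eventually_lt hg.continuous.continuousAt h
  filter_upwards [ae_differentiableAt_of_locallyLipschitz volume hu,
    ae_differentiableAt_of_locallyLipschitz volume hw,
    ae_differentiableAt_of_locallyLipschitz volume (hu.max hw),
    ae_differentiableAt_of_locallyLipschitz volume (hu.min hw)] with x hux hwx hmax hmin
  rcases lt_trichotomy (u x) (w x) with h | h | h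
  · rw [energyDensity_congr ((hlt hu hw h).mono fun y hy => max_eq_right hy.le),
      energyDensity_congr ((hlt hu hw h).mono fun y hy => min_eq_left hy.le), add_comm]
  · rw [← energyDensity_eq_of_le_of_eq (fun y => le_max_right (u y) (w y))
        (max_eq_right h.le).symm hwx hmax,
      energyDensity_eq_of_le_of_eq (fun y => min_le_left (u y) (w y)) (min_eq_left h.le) hmin hux,
      add_comm]
  · rw [energyDensity_congr ((hlt hw hu h).mono fun y hy => max_eq_left hy.le),
      energyDensity_congr ((hlt hw hu h).mono fun y hy => min_eq_right hy.le)]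

lemma energy_max_add_energy_min (hD : Bornology.IsBounded D) (hu : LocallyLipschitz u)
    (hw : LocallyLipschitz w) :
    energy D (fun y => max (u y) (w y)) + energy D (fun y => min (u y) (w y)) =
      energy D u + energy D w := by
  have h_int := fun {v : E → ℝ} (hv : LocallyLipschitz v) => integrableOn_energyDensity hv hD
  simp only [energy]
  rw [← integral_add (h_int (hu.max hw)) (h_int (hu.min hw)), ← integral_add (h_int hu) (h_int hw)]
  exact integral_congr_ae (ae_restrict_of_ae (energyDensity_max_add_energyDensity_min hu hw))

lemma energy_add_measureReal_le {G : Set E} (hD : Bornology.IsBounded D)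
    (hf : LocallyLipschitz f) (hg : LocallyLipschitz g) (hfnonneg : ∀ x, 0 ≤ f x)
    (hG : MeasurableSet G) (hGD : G ⊆ D) (hfG : ∀ x ∈ G, f x = 0) (hgG : ∀ x ∈ G, 0 < g x)
    (heq : ∀ x ∉ G, f x = g x) : energy D f + volume.real G ≤ energy D g := by
  have hfg : ∀ x, f x ≤ g x := fun x => by
    by_cases hx : x ∈ G
    · exact (hfG x hx).trans_le (hgG x hx).le
    · exact (heq x hx).le
  have hle : ∀ᵐ x, energyDensity f x + G.indicator (fun _ => (1 : ℝ)) x ≤ energyDensity g x := by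
    filter_upwards [ae_differentiableAt_of_locallyLipschitz volume hf,
      ae_differentiableAt_of_locallyLipschitz volume hg] with x hfx hgx
    by_cases hx : x ∈ G
    · rw [energyDensity_eq_zero hfnonneg (hfG x hx)]
      simp [hx, energyDensity, hgG x hx]
    · simp [energyDensity_eq_of_le_of_eq hfg (heq x hx) hfx hgx, hx]
  have hGint : IntegrableOn (G.indicator fun _ => (1 : ℝ)) D :=
    (integrableOn_const hD.measure_lt_top.ne).indicator hG
  calc energy D f + volume.real G
      = ∫ x in D, (energyDensity f x + G.indicator (fun _ => (1 : ℝ)) x) := by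
        rw [integral_add (integrableOn_energyDensity hf hD) hGint, setIntegral_indicator hG,
          inter_eq_right.2 hGD, setIntegral_const, smul_eq_mul, mul_one, energy]
    _ ≤ energy D g :=
        integral_mono_ae ((integrableOn_energyDensity hf hD).add hGint)
          (integrableOn_energyDensity hg hD) (ae_restrict_of_ae hle)

lemma eq_empty_of_energy_le {G : Set E} (hD : Bornology.IsBounded D)
    (hf : LocallyLipschitz f) (hg : LocallyLipschitz g) (hfnonneg : ∀ x, 0 ≤ f x)
    (hG : IsOpen G) (hGD : G ⊆ D) (hfG : ∀ x ∈ G, f x = 0) (hgG : ∀ x ∈ G, 0 < g x)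
    (heq : ∀ x ∉ G, f x = g x) (hle : energy D g ≤ energy D f) : G = ∅ := by
  have hgap := energy_add_measureReal_le hD hf hg hfnonneg hG.measurableSet hGD hfG hgG heq
  have hzero : volume.real G = 0 := measureReal_nonneg.antisymm' (by linarith)
  have hG_finite : volume G ≠ ∞ := (hD.subset hGD).measure_lt_top.ne
  exact (hG.measure_eq_zero_iff volume).1
    ((measureReal_eq_zero_iff hG_finite).1 hzero)

lemma energy_add_const_mul {s : ℝ} (hD : Bornology.IsBounded D) (hu : LocallyLipschitz u)
    (hφ : LocallyLipschitz φ) (hpos : ∀ x, 0 < u x + s * φ x ↔ 0 < u x) :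
    energy D (fun x => u x + s * φ x) =
      energy D u + (2 * s * ∫ x in D, ⟪∇ u x, ∇ φ x⟫) + s ^ 2 * ∫ x in D, ⟪∇ φ x, ∇ φ x⟫ := by
  have hinner := fun {f : E → ℝ} (hf : LocallyLipschitz f) =>
    integrableOn_of_locallyIntegrable_of_isBounded
      (locallyIntegrable_inner_gradient volume hf hφ) hD
  have hexpand : ∀ᵐ x, energyDensity (fun x => u x + s * φ x) x =
      energyDensity u x + 2 * s * ⟪∇ u x, ∇ φ x⟫ + s ^ 2 * ⟪∇ φ x, ∇ φ x⟫ := by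
    filter_upwards [ae_differentiableAt_of_locallyLipschitz volume hu,
      ae_differentiableAt_of_locallyLipschitz volume hφ] with x hux hφx
    simp only [energyDensity, gradient_add_const_mul hux hφx, hpos, norm_add_sq_real,
      inner_smul_right, norm_smul, mul_pow, Real.norm_eq_abs, sq_abs, real_inner_self_eq_norm_sq]
    ring
  have hsum : IntegrableOn (fun x => energyDensity u x + 2 * s * ⟪∇ u x, ∇ φ x⟫) D :=
    (integrableOn_energyDensity hu hD).add ((hinner hu).const_mul _)
  simp only [energy]
  rw [integral_congr_ae (ae_restrict_of_ae hexpand),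
    integral_add hsum ((hinner hφ).const_mul _),
    integral_add (integrableOn_energyDensity hu hD) ((hinner hu).const_mul _),
    integral_const_mul, integral_const_mul]

lemma JE_eq_ofReal_energy {n : ℕ} {D : Set (EuclideanSpace ℝ (Fin n))}
    {u : EuclideanSpace ℝ (Fin n) → ℝ} (hD : Bornology.IsBounded D) (hu : LocallyLipschitz u) :
    JE D u = ENNReal.ofReal (energy D u) := by
  rw [energy, ofReal_integral_eq_lintegral_ofReal (integrableOn_energyDensity hu hD)
    (ae_of_all _ (energyDensity_nonneg u))]
  refine lintegral_congr fun x => ?_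
  rw [energyDensity, ENNReal.ofReal_add (by positivity) (by positivity),
    ENNReal.ofReal_pow (norm_nonneg _), ofReal_norm, enorm_eq_nnnorm]
  congr 1
  split_ifs <;> simp

end Energy

section WeaklyHarmonic

variable {E : Type*} [NormedAddCommGroup E]

/-- The test function `(r² - |y - x₀|²)⁺`. Its gradient is `-2 (y - x₀)` on the ball and `0`
elsewhere, so testing weak harmonicity with it yields the derivative in `r` of the mean value over
the ball. -/
def paraboloidCap (x₀ : E) (r : ℝ) (y : E) : ℝ := max (r ^ 2 - ‖y - x₀‖ ^ 2) 0

lemma paraboloidCap_eq_zero {x₀ y : E} {r : ℝ} (hr : 0 ≤ r) (hy : y ∉ ball x₀ r) :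
    paraboloidCap x₀ r y = 0 := by
  rw [mem_ball, dist_eq_norm, not_lt] at hy
  exact max_eq_right (sub_nonpos.2 (pow_le_pow_left₀ hr hy 2))

lemma tsupport_paraboloidCap_subset (x₀ : E) {r : ℝ} (hr : 0 ≤ r) :
    tsupport (paraboloidCap x₀ r) ⊆ closedBall x₀ r :=
  closure_minimal (fun _ hy => ball_subset_closedBall
    (not_imp_comm.1 (paraboloidCap_eq_zero hr) hy)) isClosed_closedBall

variable [InnerProductSpace ℝ E]

lemma locallyLipschitz_paraboloidCap (x₀ : E) (r : ℝ) : LocallyLipschitz (paraboloidCap x₀ r) :=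
  (ContDiff.locallyLipschitz (𝕂 := ℝ)
    (contDiff_const.sub ((contDiff_id.sub contDiff_const).norm_sq ℝ))).max_const 0

lemma gradient_paraboloidCap [CompleteSpace E] (x₀ : E) {r : ℝ} (hr : 0 ≤ r) :
    ∇ (paraboloidCap x₀ r) = (ball x₀ r).indicator fun y => (-2 : ℝ) • (y - x₀) := by
  ext1 y
  by_cases hy : y ∈ ball x₀ r
  · have hcap : paraboloidCap x₀ r =ᶠ[𝓝 y] fun z => r ^ 2 - ‖z - x₀‖ ^ 2 := by
      filter_upwards [isOpen_ball.mem_nhds hy] with z hz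
      rw [mem_ball, dist_eq_norm] at hz
      exact max_eq_left (sub_nonneg.2 (pow_le_pow_left₀ (norm_nonneg _) hz.le 2))
    have hderiv : HasFDerivAt (fun z => r ^ 2 - ‖z - x₀‖ ^ 2) (-(2 • innerSL ℝ (y - x₀))) y :=
      ((hasStrictFDerivAt_norm_sq (y - x₀)).hasFDerivAt.comp y
        ((hasFDerivAt_id y).sub_const x₀)).const_sub (r ^ 2)
    rw [indicator_of_mem hy, hcap.gradient_eq]
    refine ext_inner_right ℝ fun z => ?_
    rw [inner_gradient_left, hderiv.fderiv, inner_smul_left]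
    simp [inner_sub_left]
  · rw [indicator_of_notMem hy]
    refine gradient_eq_zero_of_isLocalMin (.of_forall fun z => ?_)
    rw [paraboloidCap_eq_zero hr hy]
    exact le_max_right _ _

variable [FiniteDimensional ℝ E] [MeasurableSpace E] [BorelSpace E]

lemma hasDerivAt_setIntegral_comp_add_smul (μ : Measure E) [μ.IsAddHaarMeasure] {u : E → ℝ}
    (hu : LocallyLipschitz u) (x₀ : E) {s : Set E} (hs : IsCompact s) {t : ℝ} (ht : t ≠ 0) :
    HasDerivAt (fun t => ∫ x in s, u (x₀ + t • x) ∂μ)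
      (∫ x in s, ⟪∇ u (x₀ + t • x), x⟫ ∂μ) t := by
  have hcont : ∀ t : ℝ, Continuous fun x => u (x₀ + t • x) := fun t =>
    hu.continuous.comp (by fun_prop)
  obtain ⟨K, hK⟩ := exists_lipschitzOnWith_comp_add_smul hu x₀
    (isCompact_Icc (a := t - 1) (b := t + 1)) hs
  have hlip : ∀ x ∈ s, LipschitzOnWith (Real.nnabs K) (fun t => u (x₀ + t • x))
      (Icc (t - 1) (t + 1)) := fun x hx => (Real.nnabs_coe K).symm ▸ hK x hx
  -- As `t ≠ 0`, the map `x ↦ x₀ + t x` pulls null sets back to null sets.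
  have hdiff : ∀ᵐ x ∂μ, DifferentiableAt ℝ u (x₀ + t • x) :=
    ((measurePreserving_add_left μ x₀).quasiMeasurePreserving.comp
      (Measure.quasiMeasurePreserving_smul μ ht)).ae
        (ae_differentiableAt_of_locallyLipschitz μ hu)
  refine (hasDerivAt_integral_of_dominated_loc_of_lip (bound := fun _ => K)
    (Icc_mem_nhds (sub_one_lt t) (lt_add_one t))
    (.of_forall fun t => (hcont t).aestronglyMeasurable)
    ((hcont t).continuousOn.integrableOn_compact hs)
    (((measurable_gradient u).comp (by fun_prop)).inner measurable_id).aestronglyMeasurable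
    (ae_restrict_of_forall_mem hs.measurableSet hlip)
    (integrableOn_const hs.measure_lt_top.ne) (ae_restrict_of_ae ?_)).2
  filter_upwards [hdiff] with x hx
  change HasDerivAt (fun s : ℝ => u (x₀ + s • x)) ⟪∇ u (x₀ + t • x), x⟫ t
  rw [inner_gradient_left]
  have hline : HasDerivAt (fun t : ℝ => x₀ + t • x) x t := by
    simpa only [one_smul, id] using ((hasDerivAt_id t).smul_const x).const_add x₀
  exact hx.hasFDerivAt.comp_hasDerivAt t hline

/-- Weak harmonicity on `U`, tested against compactly supported locally Lipschitz functions. Since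
`∇φ` vanishes off `tsupport φ`, the integral may be taken over the whole space. -/
def IsWeaklyHarmonicOn (u : E → ℝ) (U : Set E) : Prop :=
  ∀ φ : E → ℝ, LocallyLipschitz φ → HasCompactSupport φ → tsupport φ ⊆ U →
    ∫ x, ⟪∇ u x, ∇ φ x⟫ = 0

namespace IsWeaklyHarmonicOn

variable {u v : E → ℝ} {U : Set E} {x₀ : E} {r : ℝ}

lemma mono {V : Set E} (h : IsWeaklyHarmonicOn u V) (hUV : U ⊆ V) : IsWeaklyHarmonicOn u U :=
  fun φ hφ hc hsupp => h φ hφ hc (hsupp.trans hUV)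

lemma setIntegral_inner_gradient_sub (h : IsWeaklyHarmonicOn u U) (hr : 0 < r)
    (hU : closedBall x₀ r ⊆ U) : ∫ y in closedBall x₀ r, ⟪∇ u y, y - x₀⟫ = 0 := by
  have hsupp := tsupport_paraboloidCap_subset x₀ hr.le
  have htest := h (paraboloidCap x₀ r) (locallyLipschitz_paraboloidCap x₀ r)
    ((isCompact_closedBall x₀ r).of_isClosed_subset (isClosed_tsupport _) hsupp) (hsupp.trans hU)
  have hinner : (fun y => ⟪∇ u y, ∇ (paraboloidCap x₀ r) y⟫) =
      (ball x₀ r).indicator fun y => -2 * ⟪∇ u y, y - x₀⟫ := by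
    ext y
    by_cases hy : y ∈ ball x₀ r <;> simp [gradient_paraboloidCap x₀ hr.le, hy, inner_smul_right]
  rw [hinner, integral_indicator measurableSet_ball, integral_const_mul,
    setIntegral_congr_set (ball_ae_eq_closedBall volume x₀ hr.ne')] at htest
  linarith

lemma hasDerivAt_setIntegral_closedBall (h : IsWeaklyHarmonicOn u U) (hu : LocallyLipschitz u)
    (hr : 0 < r) (hU : closedBall x₀ r ⊆ U) :
    HasDerivAt (fun t : ℝ => ∫ x in closedBall (0 : E) 1, u (x₀ + t • x)) 0 r := by
  have hscaled := setIntegral_comp_add_smul volume (fun y => ⟪∇ u y, y - x₀⟫) x₀ hr (closedBall 0 1)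
  rw [affinity_unitClosedBall hr.le, h.setIntegral_inner_gradient_sub hr hU, mul_zero] at hscaled
  simp only [add_sub_cancel_left, inner_smul_right, integral_const_mul, mul_eq_zero, hr.ne',
    false_or] at hscaled
  rw [← hscaled]
  exact hasDerivAt_setIntegral_comp_add_smul volume hu x₀ (isCompact_closedBall 0 1) hr.ne'

theorem setIntegral_closedBall_eq_measureReal_mul (h : IsWeaklyHarmonicOn u U)
    (hu : LocallyLipschitz u) (hr : 0 < r) (hU : closedBall x₀ r ⊆ U) :
    ∫ y in closedBall x₀ r, u y = volume.real (closedBall x₀ r) * u x₀ := by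
  set M : ℝ → ℝ := fun t => ∫ x in closedBall (0 : E) 1, u (x₀ + t • x)
  have hcont : Continuous M :=
    continuous_parametric_integral_of_continuous (f := fun t x => u (x₀ + t • x))
      (hu.continuous.comp (by fun_prop)) (isCompact_closedBall _ _)
  have hderiv : ∀ t ∈ Ioo 0 r, HasDerivAt M 0 t := fun t ht =>
    h.hasDerivAt_setIntegral_closedBall hu ht.1
      ((closedBall_subset_closedBall ht.2.le).trans hU)
  obtain ⟨_, _, hslope⟩ :=
    exists_hasDerivAt_eq_slope M (fun _ => 0) hr hcont.continuousOn hderiv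
  have hconst : M r = M 0 := by
    rw [sub_zero, eq_comm, _root_.div_eq_zero_iff] at hslope
    exact sub_eq_zero.1 (hslope.resolve_right hr.ne')
  have hM := setIntegral_comp_add_smul volume u x₀ hr (closedBall 0 1)
  have hvol := setIntegral_comp_add_smul volume (fun _ => u x₀) x₀ hr (closedBall 0 1)
  rw [affinity_unitClosedBall hr.le] at hM hvol
  have hzero : M 0 = ∫ _ in closedBall (0 : E) 1, u x₀ := by simp only [M, zero_smul, add_zero]
  have hpow : (r ^ Module.finrank ℝ E)⁻¹ ≠ 0 := by positivity
  calc ∫ y in closedBall x₀ r, u y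
      = ∫ _ in closedBall x₀ r, u x₀ :=
        mul_left_cancel₀ hpow (hM.symm.trans (hconst.trans (hzero.trans hvol)))
    _ = volume.real (closedBall x₀ r) * u x₀ := by rw [setIntegral_const, smul_eq_mul]

theorem eventuallyEq_of_le_of_eq (hu : IsWeaklyHarmonicOn u U) (hv : IsWeaklyHarmonicOn v U)
    (hul : LocallyLipschitz u) (hvl : LocallyLipschitz v) (hle : ∀ x, u x ≤ v x)
    (hx₀ : U ∈ 𝓝 x₀) (heq : u x₀ = v x₀) : u =ᶠ[𝓝 x₀] v := by
  obtain ⟨r, hr, hrU⟩ := Metric.nhds_basis_closedBall.mem_iff.1 hx₀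
  have h_int := fun {f : E → ℝ} (hf : LocallyLipschitz f) =>
    hf.continuous.continuousOn.integrableOn_compact (μ := volume) (isCompact_closedBall x₀ r)
  have hzero : ∫ y in closedBall x₀ r, (v y - u y) = 0 := by
    rw [integral_sub (h_int hvl) (h_int hul),
      hu.setIntegral_closedBall_eq_measureReal_mul hul hr hrU,
      hv.setIntegral_closedBall_eq_measureReal_mul hvl hr hrU, heq, sub_self]
  have hae : (fun y => v y - u y) =ᵐ[volume.restrict (closedBall x₀ r)] 0 :=
    (integral_eq_zero_iff_of_nonneg (fun y => sub_nonneg.2 (hle y))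
      ((h_int hvl).sub (h_int hul))).1 hzero
  have hball : EqOn (fun y => v y - u y) 0 (ball x₀ r) :=
    Measure.eqOn_open_of_ae_eq (ae_restrict_of_ae_restrict_of_subset ball_subset_closedBall hae)
      isOpen_ball (hvl.continuous.sub hul.continuous).continuousOn continuousOn_const
  filter_upwards [ball_mem_nhds x₀ hr] with y hy
  exact (sub_eq_zero.1 (hball hy)).symm

end IsWeaklyHarmonicOn

end WeaklyHarmonic

section EnergyMinimizer

variable {E : Type*} [NormedAddCommGroup E] [InnerProductSpace ℝ E] [FiniteDimensional ℝ E]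
  [MeasurableSpace E] [BorelSpace E]

/-- Minimality on a single set `D` in terms of the real-valued energy; the sets `Ω ∩ B` of
`IsMinimizer` are bounded, so that all energies on them are finite. -/
structure IsEnergyMinimizer (D : Set E) (u : E → ℝ) : Prop where
  nonneg : ∀ x, 0 ≤ u x
  locallyLipschitz : LocallyLipschitz u
  energy_le : ∀ v : E → ℝ, (∀ x, 0 ≤ v x) → LocallyLipschitz v → (∀ x ∉ D, v x = u x) →
    energy D u ≤ energy D v

lemma isEnergyMinimizer_of_isMinimizer {n : ℕ} {Ω : Set (EuclideanSpace ℝ (Fin n))}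
    {u : EuclideanSpace ℝ (Fin n) → ℝ} (hu : IsMinimizer Ω u) (R : ℝ) :
    IsEnergyMinimizer (Ω ∩ ball 0 R) u where
  nonneg := hu.1
  locallyLipschitz := hu.2.1
  energy_le v hv hvl hvu := by
    have hD : Bornology.IsBounded (Ω ∩ ball 0 R) := isBounded_ball.subset inter_subset_right
    have hsub : {x | v x ≠ u x} ⊆ Ω ∩ ball 0 R := fun x => not_imp_comm.1 (hvu x)
    have hJE := hu.2.2 v hv hvl (hD.subset hsub) (hsub.trans inter_subset_left) 0 R
      (hsub.trans inter_subset_right)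
    rwa [JE_eq_ofReal_energy hD hu.2.1, JE_eq_ofReal_energy hD hvl, ENNReal.ofReal_le_ofReal_iff
      (energy_nonneg _ v)] at hJE

namespace IsEnergyMinimizer

variable {D G K : Set E} {u v w : E → ℝ}

lemma max (hD : Bornology.IsBounded D) (hu : IsEnergyMinimizer D u) (hw : IsEnergyMinimizer D w)
    (hle : ∀ x ∉ D, w x ≤ u x) : IsEnergyMinimizer D fun x => max (u x) (w x) where
  nonneg x := le_max_of_le_left (hu.nonneg x)
  locallyLipschitz := hu.locallyLipschitz.max hw.locallyLipschitz
  energy_le v hv hvl hvmax := by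
    have hmin := hw.energy_le (fun x => min (u x) (w x))
      (fun x => le_min (hu.nonneg x) (hw.nonneg x)) (hu.locallyLipschitz.min hw.locallyLipschitz)
      fun x hx => min_eq_right (hle x hx)
    have hsum := energy_max_add_energy_min hD hu.locallyLipschitz hw.locallyLipschitz
    have hv := hu.energy_le v hv hvl fun x hx => (hvmax x hx).trans (max_eq_left (hle x hx))
    linarith

theorem isWeaklyHarmonicOn (hD : Bornology.IsBounded D) (hu : IsEnergyMinimizer D u) :
    IsWeaklyHarmonicOn u (D ∩ {x | 0 < u x}) := by
  intro φ hφ hcomp hsupp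
  have hφ_zero : ∀ x ∉ tsupport φ, φ x = 0 := fun x => image_eq_zero_of_notMem_tsupport
  set A := ∫ x in D, ⟪∇ u x, ∇ φ x⟫ with hA
  set B := ∫ x in D, ⟪∇ φ x, ∇ φ x⟫
  have hmin : IsLocalMin (fun s : ℝ => 2 * s * A + s ^ 2 * B) 0 := by
    filter_upwards [eventually_pos_add_const_mul_iff hu.locallyLipschitz.continuous hφ.continuous
      hcomp fun x hx => (hsupp hx).2] with s hs
    have hnonneg : ∀ x, 0 ≤ u x + s * φ x := fun x => by
      by_cases hx : x ∈ tsupport φ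
      · exact ((hs x).2 (hsupp hx).2).le
      · simpa only [hφ_zero x hx, mul_zero, add_zero] using hu.nonneg x
    have hvar := hu.energy_le (fun x => u x + s * φ x) hnonneg
      (hu.locallyLipschitz.add ((lipschitzWith_smul s).locallyLipschitz.comp hφ))
      fun x hx => by rw [hφ_zero x fun h => hx (hsupp h).1, mul_zero, add_zero]
    rw [energy_add_const_mul hD hu.locallyLipschitz hφ hs] at hvar
    linarith
  have hderiv : HasDerivAt (fun s : ℝ => 2 * s * A + s ^ 2 * B) (2 * A) 0 := by
    simpa using (((hasDerivAt_id (0 : ℝ)).const_mul 2).mul_const A).fun_add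
      (((hasDerivAt_id (0 : ℝ)).pow 2).mul_const B)
  rw [← setIntegral_eq_integral_of_forall_compl_eq_zero (s := D) fun x hx => by
    rw [gradient_of_notMem_tsupport fun h => hx (hsupp h).1, inner_zero_right], ← hA]
  linarith [hmin.hasDerivAt_eq_zero hderiv]

lemma eq_zero_of_mem_frontier (hDo : IsOpen D) (hD : Bornology.IsBounded D)
    (hu : IsEnergyMinimizer D u) (hv : IsEnergyMinimizer D v) (hle : ∀ x, u x ≤ v x)
    (hK : IsClosed K) (hKD : K ⊆ D) (heq : ∀ x ∉ K, u x = v x) {x : E}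
    (hx : x ∈ frontier ({y | u y < v y} ∩ {y | 0 < u y})) : u x = 0 := by
  have hu_cont := hu.locallyLipschitz.continuous
  have hlt_open : IsOpen ({y | u y < v y} ∩ {y | 0 < u y}) :=
    (isOpen_lt hu_cont hv.locallyLipschitz.continuous).inter (isOpen_lt continuous_const hu_cont)
  rw [hlt_open.frontier_eq] at hx
  have hxK : x ∈ K := closure_minimal
    (fun y hy => not_imp_comm.1 (heq y) hy.1.ne) hK hx.1
  by_contra hne
  have hux : 0 < u x := (hu.nonneg x).lt_of_ne' hne
  have hxeq : u x = v x := (hle x).antisymm (not_lt.1 fun h => hx.2 ⟨h, hux⟩)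
  have hU : D ∩ {y | 0 < u y} ∈ 𝓝 x :=
    (hDo.inter (isOpen_lt continuous_const hu_cont)).mem_nhds ⟨hKD hxK, hux⟩
  have htouch : u =ᶠ[𝓝 x] v := (hu.isWeaklyHarmonicOn hD).eventuallyEq_of_le_of_eq
    ((hv.isWeaklyHarmonicOn hD).mono (inter_subset_inter_right D fun y hy => hy.trans_le (hle y)))
    hu.locallyLipschitz hv.locallyLipschitz hle hU hxeq
  obtain ⟨y, hy, hyeq⟩ := ((mem_closure_iff_frequently.1 hx.1).and_eventually htouch).exists
  exact hy.1.ne hyeq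

lemma eq_empty_of_pos_of_frontier_eq_zero (hD : Bornology.IsBounded D)
    (hu : IsEnergyMinimizer D u) (hG : IsOpen G) (hGD : G ⊆ D) (hpos : ∀ x ∈ G, 0 < u x)
    (hfrontier : ∀ x ∈ frontier G, u x = 0) : G = ∅ := by
  have hlip : LocallyLipschitz (Gᶜ.indicator u) :=
    locallyLipschitz_indicator hu.locallyLipschitz (by rwa [frontier_compl])
  have hnonneg : ∀ x, 0 ≤ Gᶜ.indicator u x := indicator_nonneg fun x _ => hu.nonneg x
  have heq : ∀ x ∉ G, Gᶜ.indicator u x = u x := fun x hx => indicator_of_mem hx u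
  exact eq_empty_of_energy_le hD hlip hu.locallyLipschitz hnonneg hG hGD
    (fun x hx => indicator_of_notMem (not_not_intro hx) u) hpos heq
    (hu.energy_le _ hnonneg hlip fun x hx => heq x fun h => hx (hGD h))

theorem eq_of_le (hDo : IsOpen D) (hD : Bornology.IsBounded D) (hu : IsEnergyMinimizer D u)
    (hv : IsEnergyMinimizer D v) (hle : ∀ x, u x ≤ v x) (hK : IsClosed K) (hKD : K ⊆ D)
    (heq : ∀ x ∉ K, u x = v x) : u = v := by
  have hlt_open : IsOpen {x | u x < v x} :=
    isOpen_lt hu.locallyLipschitz.continuous hv.locallyLipschitz.continuous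
  have hlt_D : {x | u x < v x} ⊆ D := fun x hx => hKD (not_imp_comm.1 (heq x) hx.ne)
  have hpos_empty : {x | u x < v x} ∩ {x | 0 < u x} = ∅ :=
    hu.eq_empty_of_pos_of_frontier_eq_zero hD
      (hlt_open.inter (isOpen_lt continuous_const hu.locallyLipschitz.continuous))
      (inter_subset_left.trans hlt_D) (fun _ hx => hx.2)
      fun _ => eq_zero_of_mem_frontier hDo hD hu hv hle hK hKD heq
  have hu_zero : ∀ x, u x < v x → u x = 0 := fun x hx =>
    (hu.nonneg x).antisymm' (not_lt.1 fun h => notMem_empty x (hpos_empty ▸ ⟨hx, h⟩))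
  have hlt_empty : {x | u x < v x} = ∅ :=
    eq_empty_of_energy_le hD hu.locallyLipschitz hv.locallyLipschitz hu.nonneg hlt_open hlt_D
      hu_zero (fun x hx => (hu.nonneg x).trans_lt hx) (fun x hx => (hle x).antisymm (not_lt.1 hx))
      (hv.energy_le u hu.nonneg hu.locallyLipschitz fun x hx => heq x fun h => hx (hKD h))
  exact funext fun x => (hle x).antisymm (not_lt.1 fun h => notMem_empty x (hlt_empty ▸ h))

end IsEnergyMinimizer

end EnergyMinimizer

end AltCaffarelli

theorem stmt1_general {n : ℕ} {Ω K : Set (EuclideanSpace ℝ (Fin n))}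
    {u w : EuclideanSpace ℝ (Fin n) → ℝ} (hΩ : IsOpen Ω) (hu : IsMinimizer Ω u)
    (hw : IsMinimizer Ω w) (hK : IsCompact K) (hKΩ : K ⊆ Ω) (hbd : ∀ x ∉ K, w x ≤ u x) :
    ∀ x, w x ≤ u x := by
  obtain ⟨R, hKR⟩ := hK.isBounded.subset_ball 0
  have hKD : K ⊆ Ω ∩ ball 0 R := subset_inter hKΩ hKR
  have hD : Bornology.IsBounded (Ω ∩ ball 0 R) := isBounded_ball.subset inter_subset_right
  have hu' := AltCaffarelli.isEnergyMinimizer_of_isMinimizer hu R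
  have hmax := hu'.max hD (AltCaffarelli.isEnergyMinimizer_of_isMinimizer hw R)
    fun x hx => hbd x fun h => hx (hKD h)
  have heq := hu'.eq_of_le (hΩ.inter isOpen_ball) hD hmax (fun x => le_max_left _ _)
    hK.isClosed hKD fun x hx => (max_eq_left (hbd x hx)).symm
  exact fun x => max_eq_left_iff.1 (congrFun heq x).symm

/-- comparison principle in an annulus. -/
theorem stmt1 {n : ℕ} (hn : 2 ≤ n) (u w : EuclideanSpace ℝ (Fin n) → ℝ)
    (hu : IsMinimizer (Metric.ball (0 : EuclideanSpace ℝ (Fin n)) 1) u)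
    (hw : IsMinimizer (Metric.ball (0 : EuclideanSpace ℝ (Fin n)) 1) w)
    (ε : ℝ) (hε0 : 0 < ε) (hε1 : ε < 1)
    (hbd : ∀ x ∉ Metric.ball (0 : EuclideanSpace ℝ (Fin n)) (1 - ε), w x ≤ u x) :
    ∀ x, w x ≤ u x :=
  stmt1_general isOpen_ball hu hw (isCompact_closedBall 0 (1 - ε))
    (closedBall_subset_ball (by linarith)) fun x hx => hbd x fun h => hx (ball_subset_closedBall h)
end

section
/- Uniqueness with boundary data U₀: if w is a minimizer of J in the open unit ball B₁ and w(x) = U₀(x) for all x ∈ ℝⁿ \ B₁, then w = U₀ everywhere on ℝⁿ. -/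
open MeasureTheory Metric Set Filter ENNReal NNReal

/-!
Let `u` minimize `J` in `Ω'` and let `w` minimize `J` in a smaller bounded set `Ω`, with `w = u`
outside `Ω`. Comparing first with `u` and then with a competitor shows that `w` minimizes `J` in
`Ω'` too. Locally Lipschitz functions have the same gradient almost everywhere on the set where
they agree, so `J(max u w) + J(min u w) = J(u) + J(w)` and `max u w` is again a minimizer. Where a
minimizer is positive it is harmonic, so it has the mean value property; since `max u w` lies above
both `u` and `w`, a point at which `u = w > 0` has a neighbourhood on which `u = max u w = w`.
Hence `u` vanishes on the boundary of the bounded open set `{u > 0} ∩ {w ≠ u}`, and replacing `u`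
by `0` on that set would lower the energy by at least its volume, so the set is empty. By symmetry
`{w > 0} ∩ {w ≠ u}` is empty as well.
-/

open scoped Gradient Pointwise RealInnerProductSpace Topology

section LocallyLipschitz

variable {E F : Type*} [NormedAddCommGroup E] [NormedSpace ℝ E] [NormedAddCommGroup F]

lemma ae_differentiableAt_of_locallyLipschitz [NormedSpace ℝ F] [FiniteDimensional ℝ E]
    [FiniteDimensional ℝ F] [MeasurableSpace E] [BorelSpace E] {μ : Measure E}
    [μ.IsAddHaarMeasure] {f : E → F} (hf : LocallyLipschitz f) :
    ∀ᵐ x ∂μ, DifferentiableAt ℝ f x := by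
  refine measure_null_of_locally_null _ fun x _ => ?_
  obtain ⟨K, t, ht, hK⟩ := hf x
  refine ⟨_, inter_mem_nhdsWithin _ (interior_mem_nhds.mpr ht), measure_mono_null ?_
    (hK.ae_differentiableWithinAt_of_mem (μ := μ))⟩
  exact fun y hy hdiff => hy.1 ((hdiff (interior_subset hy.2)).differentiableAt
    (mem_interior_iff_mem_nhds.mp hy.2))

lemma exists_lipschitzOnWith_of_locallyLipschitz {X Y : Type*} [PseudoMetricSpace X]
    [ProperSpace X] [PseudoMetricSpace Y] {f : X → Y} (hf : LocallyLipschitz f) {s : Set X}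
    (hs : Bornology.IsBounded s) : ∃ K, LipschitzOnWith K f s :=
  have ⟨K, hK⟩ := hf.locallyLipschitzOn.exists_lipschitzOnWith_of_compact hs.isCompact_closure
  ⟨K, hK.mono subset_closure⟩

lemma exists_mem_segment_inter_frontier {s : Set E} {x y : E} (hx : x ∈ s) (hy : y ∉ s) :
    ∃ z ∈ segment ℝ x y, z ∈ frontier s := by
  rw [frontier_eq_closure_inter_closure]
  exact isPreconnected_closed_iff.mp (convex_segment x y).isPreconnected _ _ isClosed_closure
    isClosed_closure (fun z _ => (em (z ∈ s)).imp (subset_closure ·) (subset_closure ·))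
    ⟨x, left_mem_segment ℝ x y, subset_closure hx⟩ ⟨y, right_mem_segment ℝ x y, subset_closure hy⟩

lemma lipschitzOnWith_indicator {f : E → F} {K : ℝ≥0} {s t : Set E} (hf : LipschitzOnWith K f t)
    (ht : Convex ℝ t) (hs : ∀ x ∈ frontier s, f x = 0) : LipschitzOnWith K (s.indicator f) t := by
  have dist_le_of_notMem : ∀ x ∈ t, x ∈ s → ∀ y ∈ t, y ∉ s → dist (f x) 0 ≤ K * dist x y := by
    intro x hxt hxs y hyt hys
    obtain ⟨z, hz, hzs⟩ := exists_mem_segment_inter_frontier hxs hys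
    calc dist (f x) 0 = dist (f x) (f z) := by rw [hs z hzs]
      _ ≤ K * dist x z := hf.dist_le_mul x hxt z (ht.segment_subset hxt hyt hz)
      _ ≤ K * dist x y := by
        gcongr
        linarith [dist_add_dist_of_mem_segment hz, dist_nonneg (x := z) (y := y)]
  refine LipschitzOnWith.of_dist_le_mul fun x hx y hy => ?_
  by_cases hxs : x ∈ s <;> by_cases hys : y ∈ s <;>
    simp only [indicator, hxs, hys, if_true, if_false]
  · exact hf.dist_le_mul x hx y hy
  · exact dist_le_of_notMem x hx hxs y hy hys
  · rw [dist_comm, dist_comm x]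
    exact dist_le_of_notMem y hy hys x hx hxs
  · rw [dist_self]
    positivity

lemma locallyLipschitz_indicator {f : E → F} {s : Set E} (hf : LocallyLipschitz f)
    (hs : ∀ x ∈ frontier s, f x = 0) : LocallyLipschitz (s.indicator f) := fun x =>
  have ⟨K, _, ht, hK⟩ := hf x
  have ⟨r, hr, hrt⟩ := Metric.mem_nhds_iff.mp ht
  ⟨K, ball x r, ball_mem_nhds x hr,
    lipschitzOnWith_indicator (hK.mono hrt) (convex_ball x r) hs⟩

end LocallyLipschitz

section Gradient

variable {E : Type*} [NormedAddCommGroup E] [InnerProductSpace ℝ E] {f g : E → ℝ} {x : E}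

lemma gradient_eq_of_le_of_eq [CompleteSpace E] (hf : DifferentiableAt ℝ f x)
    (hg : DifferentiableAt ℝ g x) (hle : ∀ᶠ y in 𝓝 x, f y ≤ g y) (heq : f x = g x) :
    ∇ f x = ∇ g x := by
  have hmin : IsLocalMin (fun y => g y - f y) x := by
    filter_upwards [hle] with y hy
    rw [heq, sub_self]
    exact sub_nonneg.mpr hy
  have hfderiv := hmin.fderiv_eq_zero
  rw [fderiv_fun_sub hg hf, sub_eq_zero] at hfderiv
  rw [gradient, gradient, hfderiv]

lemma measurable_gradient [CompleteSpace E] [MeasurableSpace E] [BorelSpace E] (f : E → ℝ) :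
    Measurable (∇ f) :=
  (InnerProductSpace.toDual ℝ E).symm.continuous.measurable.comp (measurable_fderiv ℝ f)

variable [FiniteDimensional ℝ E]

lemma exists_norm_gradient_le (hf : LocallyLipschitz f) {s : Set E}
    (hs : Bornology.IsBounded s) : ∃ C, ∀ y ∈ s, ‖∇ f y‖ ≤ C := by
  obtain ⟨r, hr⟩ := hs.subset_ball 0
  obtain ⟨K, hK⟩ := exists_lipschitzOnWith_of_locallyLipschitz hf (isBounded_ball (x := 0) (r := r))
  refine ⟨K, fun y hy => ?_⟩
  rw [gradient, LinearIsometryEquiv.norm_map]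
  exact norm_fderiv_le_of_lipschitzOn ℝ (isOpen_ball.mem_nhds (hr hy)) hK

variable [MeasurableSpace E] [BorelSpace E] {μ : Measure E} [μ.IsAddHaarMeasure]

-- Both gradients coincide with that of `max f g`, which touches `f` and `g` from above.
lemma ae_gradient_eq_of_eq (hf : LocallyLipschitz f) (hg : LocallyLipschitz g) :
    ∀ᵐ x ∂μ, f x = g x → ∇ f x = ∇ g x := by
  filter_upwards [ae_differentiableAt_of_locallyLipschitz hf,
    ae_differentiableAt_of_locallyLipschitz hg,
    ae_differentiableAt_of_locallyLipschitz (hf.max hg)] with x hfx hgx hmax heq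
  calc ∇ f x = ∇ (fun y => max (f y) (g y)) x :=
        gradient_eq_of_le_of_eq hfx hmax (.of_forall fun _ => le_max_left _ _) (by simp [heq])
    _ = ∇ g x :=
      (gradient_eq_of_le_of_eq hgx hmax (.of_forall fun _ => le_max_right _ _) (by simp [heq])).symm

lemma integrableOn_inner_gradient (hf : LocallyLipschitz f) (hg : LocallyLipschitz g) {s : Set E}
    (hs : Bornology.IsBounded s) : IntegrableOn (fun x => ⟪∇ f x, ∇ g x⟫) s μ := by
  obtain ⟨r, hr⟩ := hs.subset_ball 0
  obtain ⟨C, hC⟩ := exists_norm_gradient_le hf (isBounded_ball (x := 0) (r := r))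
  obtain ⟨C', hC'⟩ := exists_norm_gradient_le hg (isBounded_ball (x := 0) (r := r))
  refine IntegrableOn.mono_set (t := ball 0 r) ?_ hr
  refine Measure.integrableOn_of_bounded (M := C * C') measure_ball_lt_top.ne
    ((measurable_gradient f).inner (measurable_gradient g)).aestronglyMeasurable ?_
  filter_upwards [ae_restrict_mem measurableSet_ball] with x hx
  exact (norm_inner_le_norm _ _).trans
    (mul_le_mul (hC x hx) (hC' x hx) (norm_nonneg _) ((norm_nonneg _).trans (hC x hx)))

lemma integrableOn_norm_gradient_sq (hf : LocallyLipschitz f) {s : Set E}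
    (hs : Bornology.IsBounded s) : IntegrableOn (fun x => ‖∇ f x‖ ^ 2) s μ := by
  simpa only [real_inner_self_eq_norm_sq] using integrableOn_inner_gradient hf hf hs

lemma setIntegral_norm_gradient_add_mul_sq (hf : LocallyLipschitz f) (hg : LocallyLipschitz g)
    {s : Set E} (hs : Bornology.IsBounded s) (t : ℝ) :
    ∫ x in s, ‖∇ (fun y => f y + t * g y) x‖ ^ 2 ∂μ = ∫ x in s, ‖∇ f x‖ ^ 2 ∂μ
      + (t * (2 * ∫ x in s, ⟪∇ f x, ∇ g x⟫ ∂μ) + t ^ 2 * ∫ x in s, ‖∇ g x‖ ^ 2 ∂μ) := by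
  have hpoint : ∀ᵐ x ∂μ.restrict s, ‖∇ (fun y => f y + t * g y) x‖ ^ 2 =
      ‖∇ f x‖ ^ 2 + (t * 2 * ⟪∇ f x, ∇ g x⟫ + t ^ 2 * ‖∇ g x‖ ^ 2) := by
    refine ae_restrict_of_ae ?_
    filter_upwards [ae_differentiableAt_of_locallyLipschitz hf,
      ae_differentiableAt_of_locallyLipschitz hg] with x hfx hgx
    have hgrad : ∇ (fun y => f y + t * g y) x = ∇ f x + t • ∇ g x := by
      simp only [gradient, fderiv_fun_add hfx (hgx.const_mul t), fderiv_const_mul hgx, map_add,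
        map_smul]
    rw [hgrad, norm_add_sq_real, inner_smul_right, norm_smul, mul_pow, Real.norm_eq_abs, sq_abs]
    ring
  have hfg := (integrableOn_inner_gradient (μ := μ) hf hg hs).const_mul (t * 2)
  have hgg := (integrableOn_norm_gradient_sq (μ := μ) hg hs).const_mul (t ^ 2)
  have hsum : IntegrableOn (fun x => t * 2 * ⟪∇ f x, ∇ g x⟫ + t ^ 2 * ‖∇ g x‖ ^ 2) s μ :=
    hfg.add hgg
  rw [integral_congr_ae hpoint, integral_add (integrableOn_norm_gradient_sq hf hs) hsum,
    integral_add hfg hgg, integral_const_mul, integral_const_mul, mul_assoc]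

lemma setLIntegral_nnnorm_gradient_sq (hf : LocallyLipschitz f) {s : Set E}
    (hs : Bornology.IsBounded s) :
    ∫⁻ x in s, (‖∇ f x‖₊ : ℝ≥0∞) ^ 2 ∂μ = ENNReal.ofReal (∫ x in s, ‖∇ f x‖ ^ 2 ∂μ) := by
  rw [ofReal_integral_eq_lintegral_ofReal (integrableOn_norm_gradient_sq hf hs)
    (.of_forall fun x => by positivity)]
  refine lintegral_congr fun x => ?_
  rw [ENNReal.ofReal_pow (norm_nonneg _), ofReal_norm, enorm_eq_nnnorm]

end Gradient

section Paraboloid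

variable {E : Type*} [NormedAddCommGroup E]

/-- The paraboloid `(r² - ‖x - x₀‖²) / 2` truncated below at `0`. As a test function supported in
`closedBall x₀ r` it has gradient `-(x - x₀)` there, so pairing it with `∇ f` produces the radial
derivative of the averages of `f`. -/
noncomputable def truncatedParaboloid (x₀ : E) (r : ℝ) (x : E) : ℝ :=
  max 0 ((r ^ 2 - ‖x - x₀‖ ^ 2) / 2)

lemma support_truncatedParaboloid_subset (x₀ : E) {r : ℝ} (hr : 0 ≤ r) :
    Function.support (truncatedParaboloid x₀ r) ⊆ closedBall x₀ r := by
  refine Function.support_subset_iff'.mpr fun x hx => max_eq_left ?_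
  rw [mem_closedBall, not_le, dist_eq_norm] at hx
  linarith [pow_le_pow_left₀ hr hx.le 2]

lemma truncatedParaboloid_of_mem_closedBall {x₀ x : E} {r : ℝ} (hx : x ∈ closedBall x₀ r) :
    truncatedParaboloid x₀ r x = (r ^ 2 - ‖x - x₀‖ ^ 2) / 2 := by
  rw [mem_closedBall, dist_eq_norm] at hx
  exact max_eq_right (by linarith [pow_le_pow_left₀ (norm_nonneg _) hx 2])

variable [InnerProductSpace ℝ E]

lemma contDiff_paraboloid (x₀ : E) (r : ℝ) :
    ContDiff ℝ 1 fun x : E => (r ^ 2 - ‖x - x₀‖ ^ 2) / 2 :=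
  (contDiff_const.sub ((contDiff_id.sub contDiff_const).norm_sq ℝ)).div_const 2

lemma gradient_paraboloid [CompleteSpace E] (x₀ : E) (r : ℝ) (x : E) :
    ∇ (fun x => (r ^ 2 - ‖x - x₀‖ ^ 2) / 2) x = -(x - x₀) := by
  refine HasGradientAt.gradient (hasGradientAt_iff_hasFDerivAt.mpr ?_)
  simp only [div_eq_mul_inv]
  have hsq : HasFDerivAt (fun x => ‖x - x₀‖ ^ 2) _ x := ((hasFDerivAt_id x).sub_const x₀).norm_sq
  refine ((hsq.const_sub (r ^ 2)).mul_const 2⁻¹).congr_fderiv ?_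
  ext y
  simp [InnerProductSpace.toDual_apply_apply]

lemma locallyLipschitz_truncatedParaboloid (x₀ : E) (r : ℝ) :
    LocallyLipschitz (truncatedParaboloid x₀ r) :=
  (contDiff_paraboloid x₀ r).locallyLipschitz.const_max 0

lemma ae_gradient_truncatedParaboloid [FiniteDimensional ℝ E] [MeasurableSpace E] [BorelSpace E]
    {μ : Measure E} [μ.IsAddHaarMeasure] (x₀ : E) (r : ℝ) :
    ∀ᵐ x ∂μ, x ∈ closedBall x₀ r → ∇ (truncatedParaboloid x₀ r) x = -(x - x₀) := by
  filter_upwards [ae_gradient_eq_of_eq (locallyLipschitz_truncatedParaboloid x₀ r)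
    (contDiff_paraboloid x₀ r).locallyLipschitz] with x hgrad hx
  rw [hgrad (truncatedParaboloid_of_mem_closedBall hx), gradient_paraboloid]

end Paraboloid

section MeanValue

/-- The mean value property at the single point `x`: the average of `f` over `closedBall x r`
equals `f x` for all sufficiently small radii `r > 0`. -/
def HasMeanValueAt {X : Type*} [MetricSpace X] [MeasurableSpace X] (μ : Measure X)
    (f : X → ℝ) (x : X) : Prop :=
  ∀ᶠ r in 𝓝[>] (0 : ℝ), ⨍ y in closedBall x r, f y ∂μ = f x

lemma HasMeanValueAt.eventuallyEq_of_le {X : Type*} [MetricSpace X] [ProperSpace X]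
    [MeasurableSpace X] [BorelSpace X] {μ : Measure X} [μ.IsOpenPosMeasure]
    [IsFiniteMeasureOnCompacts μ] {f g : X → ℝ} {x : X} (hf : HasMeanValueAt μ f x)
    (hg : HasMeanValueAt μ g x) (hfc : Continuous f) (hgc : Continuous g)
    (hle : ∀ᶠ y in 𝓝 x, f y ≤ g y) (heq : f x = g x) : f =ᶠ[𝓝 x] g := by
  obtain ⟨ρ, hρ, hball⟩ := Metric.eventually_nhds_iff_ball.mp hle
  obtain ⟨r, hfr, hgr, hr₀, hrρ⟩ := (hf.and (hg.and (Ioo_mem_nhdsGT hρ))).exists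
  have hμ₀ : μ.real (closedBall x r) ≠ 0 :=
    (ENNReal.toReal_pos (measure_closedBall_pos μ x hr₀).ne' measure_closedBall_lt_top.ne).ne'
  have hfi : IntegrableOn f (closedBall x r) μ :=
    hfc.continuousOn.integrableOn_compact (isCompact_closedBall x r)
  have hgi : IntegrableOn g (closedBall x r) μ :=
    hgc.continuousOn.integrableOn_compact (isCompact_closedBall x r)
  have hint : ∫ y in closedBall x r, f y ∂μ = ∫ y in closedBall x r, g y ∂μ := by
    rw [← heq, ← hfr, setAverage_eq, setAverage_eq, smul_eq_mul, smul_eq_mul] at hgr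
    exact (mul_left_cancel₀ (inv_ne_zero hμ₀) hgr).symm
  have hae : f =ᵐ[μ.restrict (closedBall x r)] g :=
    (integral_eq_iff_of_ae_le hfi hgi <| (ae_restrict_mem measurableSet_closedBall).mono
      fun y hy => hball y (closedBall_subset_ball hrρ hy)).mp hint
  have heqOn : EqOn f g (ball x r) := Measure.eqOn_open_of_ae_eq
    (ae_restrict_of_ae_restrict_of_subset ball_subset_closedBall hae) isOpen_ball
    hfc.continuousOn hgc.continuousOn
  exact heqOn.eventuallyEq_of_mem (ball_mem_nhds x hr₀)

section NormedSpace

variable {E F : Type*} [NormedAddCommGroup E] [NormedSpace ℝ E] [FiniteDimensional ℝ E]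
  [MeasurableSpace E] [BorelSpace E] [NormedAddCommGroup F] [NormedSpace ℝ F]
  {μ : Measure E} [μ.IsAddHaarMeasure] {s : ℝ}

lemma quasiMeasurePreserving_add_smul (x₀ : E) (hs : s ≠ 0) :
    Measure.QuasiMeasurePreserving (fun y => x₀ + s • y) μ μ :=
  (measurePreserving_add_left μ x₀).quasiMeasurePreserving.comp
    (Measure.quasiMeasurePreserving_smul μ hs)

lemma setAverage_closedBall_eq (f : E → F) (x₀ : E) (hs : 0 < s) :
    ⨍ x in closedBall x₀ s, f x ∂μ = ⨍ y in closedBall 0 1, f (x₀ + s • y) ∂μ := by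
  have hpre : (x₀ + ·) ⁻¹' closedBall x₀ s = s • closedBall (0 : E) 1 := by
    rw [_root_.smul_closedBall _ _ zero_le_one, smul_zero, Real.norm_of_nonneg hs.le, mul_one,
      preimage_add_closedBall, sub_self]
  rw [setAverage_eq, setAverage_eq, Measure.addHaar_real_closedBall' μ x₀ hs.le,
    Measure.setIntegral_comp_smul_of_pos μ (fun z => f (x₀ + z)) _ hs, ← hpre,
    (measurePreserving_add_left μ x₀).setIntegral_preimage_emb (measurableEmbedding_addLeft x₀),
    smul_smul, mul_inv, mul_comm]

lemma tendsto_setAverage_closedBall {f : E → ℝ} (hf : Continuous f) (x₀ : E) :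
    Tendsto (fun s => ⨍ x in closedBall x₀ s, f x ∂μ) (𝓝[>] 0) (𝓝 (f x₀)) := by
  have hcont : Continuous fun s : ℝ => ⨍ y in closedBall (0 : E) 1, f (x₀ + s • y) ∂μ := by
    simp only [setAverage_eq]
    have hjoint : Continuous fun p : ℝ × E => f (x₀ + p.1 • p.2) := by fun_prop
    exact (continuous_parametric_integral_of_continuous (μ := μ) (f := fun s y => f (x₀ + s • y))
      hjoint (isCompact_closedBall 0 1)).const_smul (μ.real (closedBall (0 : E) 1))⁻¹
  have hzero : ⨍ y in closedBall (0 : E) 1, f (x₀ + (0 : ℝ) • y) ∂μ = f x₀ := by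
    simp only [zero_smul, add_zero]
    exact setAverage_const (measure_closedBall_pos μ 0 one_pos).ne' measure_closedBall_lt_top.ne _
  refine ((hcont.tendsto' 0 _ hzero).mono_left nhdsWithin_le_nhds).congr' ?_
  filter_upwards [self_mem_nhdsWithin] with s hs
  exact (setAverage_closedBall_eq f x₀ hs).symm

end NormedSpace

variable {E : Type*} [NormedAddCommGroup E] [InnerProductSpace ℝ E] [FiniteDimensional ℝ E]
  [MeasurableSpace E] [BorelSpace E] {μ : Measure E} [μ.IsAddHaarMeasure] {s : ℝ} {f : E → ℝ}

lemma hasDerivAt_setIntegral_comp_add_smul (hf : LocallyLipschitz f) (x₀ : E) {D : Set E}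
    (hD : Bornology.IsBounded D) (hDm : MeasurableSet D) (hs : s ≠ 0) :
    HasDerivAt (fun t => ∫ y in D, f (x₀ + t • y) ∂μ)
      (∫ y in D, ⟪∇ f (x₀ + s • y), y⟫ ∂μ) s := by
  have hcompact : IsCompact ((fun p : ℝ × E => x₀ + p.1 • p.2) '' closedBall s 1 ×ˢ closure D) :=
    ((isCompact_closedBall s 1).prod hD.isCompact_closure).image (by fun_prop)
  obtain ⟨K, hK⟩ := exists_lipschitzOnWith_of_locallyLipschitz hf hcompact.isBounded
  have hmeas (t : ℝ) : Continuous fun y => f (x₀ + t • y) := hf.continuous.comp (by fun_prop)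
  refine (hasDerivAt_integral_of_dominated_loc_of_lip (bound := fun y => K * ‖y‖)
    (F := fun t y => f (x₀ + t • y)) (closedBall_mem_nhds s one_pos)
    (.of_forall fun t => (hmeas t).aestronglyMeasurable) ?_
    (((measurable_gradient f).comp (by fun_prop)).inner measurable_id).aestronglyMeasurable
    ?_ ?_ ?_).2
  · exact ((hmeas s).continuousOn.integrableOn_compact hD.isCompact_closure).mono_set
      subset_closure
  · filter_upwards [ae_restrict_mem hDm] with y hy
    refine LipschitzOnWith.of_dist_le_mul fun a ha b hb => ?_
    calc dist (f (x₀ + a • y)) (f (x₀ + b • y))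
      _ ≤ K * dist (x₀ + a • y) (x₀ + b • y) :=
        hK.dist_le_mul _ ⟨(a, y), ⟨ha, subset_closure hy⟩, rfl⟩
          _ ⟨(b, y), ⟨hb, subset_closure hy⟩, rfl⟩
      _ = Real.nnabs (K * ‖y‖) * dist a b := by
        rw [dist_add_left, dist_eq_norm, ← sub_smul, norm_smul, Real.coe_nnabs,
          abs_of_nonneg (by positivity), ← dist_eq_norm]
        ring
  · exact (continuous_const.mul continuous_norm).continuousOn.integrableOn_compact
      hD.isCompact_closure |>.mono_set subset_closure
  · filter_upwards [ae_restrict_of_ae ((quasiMeasurePreserving_add_smul x₀ hs).ae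
      (ae_differentiableAt_of_locallyLipschitz hf))] with y hy
    have hline : HasDerivAt (fun t : ℝ => x₀ + t • y) y s := by
      simpa only [one_smul, id] using ((hasDerivAt_id s).smul_const y).const_add x₀
    exact hy.hasGradientAt.hasFDerivAt.comp_hasDerivAt s hline

lemma hasDerivAt_setAverage_closedBall (hf : LocallyLipschitz f) (x₀ : E) (hs : 0 < s) :
    HasDerivAt (fun t => ⨍ x in closedBall x₀ t, f x ∂μ)
      (s⁻¹ * ⨍ x in closedBall x₀ s, ⟪∇ f x, x - x₀⟫ ∂μ) s := by
  have hderiv := (hasDerivAt_setIntegral_comp_add_smul (μ := μ) hf x₀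
    (isBounded_closedBall (x := 0) (r := 1)) measurableSet_closedBall hs.ne').const_mul
    (μ.real (closedBall (0 : E) 1))⁻¹
  have hvalue : s⁻¹ * ⨍ x in closedBall x₀ s, ⟪∇ f x, x - x₀⟫ ∂μ =
      (μ.real (closedBall (0 : E) 1))⁻¹ *
        ∫ y in closedBall 0 1, ⟪∇ f (x₀ + s • y), y⟫ ∂μ := by
    simp only [setAverage_closedBall_eq _ x₀ hs, setAverage_eq, add_sub_cancel_left,
      inner_smul_right, integral_const_mul, smul_eq_mul]
    field_simp
  rw [hvalue]
  refine hderiv.congr_of_eventuallyEq ?_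
  filter_upwards [Ioi_mem_nhds hs] with t ht
  rw [setAverage_closedBall_eq _ x₀ ht, setAverage_eq, smul_eq_mul]

lemma hasMeanValueAt_of_forall_setIntegral_inner_eq_zero (hf : LocallyLipschitz f) {x₀ : E} {ρ : ℝ}
    (hρ : 0 < ρ) (h : ∀ r ∈ Ioo 0 ρ, ∫ x in closedBall x₀ r, ⟪∇ f x, x - x₀⟫ ∂μ = 0) :
    HasMeanValueAt μ f x₀ := by
  have hderiv : ∀ r ∈ Ioo 0 ρ, HasDerivAt (fun t => ⨍ x in closedBall x₀ t, f x ∂μ) 0 r := by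
    intro r hr
    simpa only [setAverage_eq, h r hr, smul_zero, mul_zero] using
      hasDerivAt_setAverage_closedBall (μ := μ) hf x₀ hr.1
  obtain ⟨c, hc⟩ := isOpen_Ioo.exists_is_const_of_deriv_eq_zero isPreconnected_Ioo
    (fun r hr => (hderiv r hr).differentiableAt.differentiableWithinAt)
    (fun r hr => (hderiv r hr).deriv)
  have hev : ∀ᶠ r in 𝓝[>] (0 : ℝ), ⨍ x in closedBall x₀ r, f x ∂μ = c := by
    filter_upwards [Ioo_mem_nhdsGT hρ] with r hr using hc r hr
  have hcx : c = f x₀ := tendsto_nhds_unique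
    (tendsto_const_nhds.congr' (hev.mono fun _ => Eq.symm))
    (tendsto_setAverage_closedBall hf.continuous x₀)
  rwa [hcx] at hev

end MeanValue

lemma eq_zero_of_eventually_nonneg_mul_add_sq_mul {a b : ℝ}
    (h : ∀ᶠ t in 𝓝 (0 : ℝ), 0 ≤ t * a + t ^ 2 * b) : a = 0 := by
  have hmin : IsLocalMin (fun t : ℝ => t * a + t ^ 2 * b) 0 := by
    simpa [IsLocalMin, IsMinFilter] using h
  have hderiv : HasDerivAt (fun t : ℝ => t * a + t ^ 2 * b) a 0 := by
    simpa using
      ((hasDerivAt_id (0 : ℝ)).mul_const a).fun_add ((hasDerivAt_pow 2 (0 : ℝ)).mul_const b)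
  exact hmin.hasDerivAt_eq_zero hderiv

section Energy

variable {n : ℕ} {D D' Ω Ω' : Set (EuclideanSpace ℝ (Fin n))}
  {u v w : EuclideanSpace ℝ (Fin n) → ℝ}

lemma measurable_nnnorm_gradient_sq (u : EuclideanSpace ℝ (Fin n) → ℝ) :
    Measurable fun x => (‖∇ u x‖₊ : ℝ≥0∞) ^ 2 :=
  (measurable_gradient u).nnnorm.coe_nnreal_ennreal.pow_const 2

lemma measurable_energy_density (hu : Continuous u) :
    Measurable fun x => (‖∇ u x‖₊ : ℝ≥0∞) ^ 2 + if 0 < u x then 1 else 0 :=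
  (measurable_nnnorm_gradient_sq u).add
    (measurable_const.ite (measurableSet_lt measurable_const hu.measurable) measurable_const)

lemma JE_le_ofReal_add_volume (hu : LocallyLipschitz u) (hD : Bornology.IsBounded D) :
    JE D u ≤ ENNReal.ofReal (∫ x in D, ‖∇ u x‖ ^ 2) + volume D := by
  rw [← setLIntegral_nnnorm_gradient_sq hu hD, ← setLIntegral_one,
    ← lintegral_add_left (measurable_nnnorm_gradient_sq u)]
  refine lintegral_mono fun x => ?_
  gcongr
  split_ifs <;> simp

lemma JE_eq_ofReal_add_volume (hu : LocallyLipschitz u) (hD : Bornology.IsBounded D)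
    (hDm : MeasurableSet D) (hpos : ∀ x ∈ D, 0 < u x) :
    JE D u = ENNReal.ofReal (∫ x in D, ‖∇ u x‖ ^ 2) + volume D := by
  rw [← setLIntegral_nnnorm_gradient_sq hu hD, ← setLIntegral_one,
    ← lintegral_add_left (measurable_nnnorm_gradient_sq u)]
  exact setLIntegral_congr_fun hDm fun x hx => by rw [if_pos (hpos x hx)]

lemma JE_ne_top (hu : LocallyLipschitz u) (hD : Bornology.IsBounded D) : JE D u ≠ ∞ :=
  ne_top_of_le_ne_top (ENNReal.add_ne_top.mpr ⟨ofReal_ne_top, hD.measure_lt_top.ne⟩)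
    (JE_le_ofReal_add_volume hu hD)

lemma JE_congr (hu : LocallyLipschitz u) (hv : LocallyLipschitz v) (h : EqOn u v D) :
    JE D u = JE D v := by
  refine lintegral_congr_ae (ae_restrict_of_ae_restrict_of_subset (t := {x | u x = v x}) h ?_)
  filter_upwards [ae_restrict_mem (isClosed_eq hu.continuous hv.continuous).measurableSet,
    ae_restrict_of_ae (ae_gradient_eq_of_eq hu hv)] with x hx hgrad
  rw [hgrad hx, hx]

lemma JE_inter_add_sdiff (D : Set (EuclideanSpace ℝ (Fin n))) (hD' : MeasurableSet D')
    (u : EuclideanSpace ℝ (Fin n) → ℝ) : JE (D ∩ D') u + JE (D \ D') u = JE D u :=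
  lintegral_inter_add_sdiff _ D hD'

lemma JE_max_add_JE_min (hu : LocallyLipschitz u) (hw : LocallyLipschitz w)
    (D : Set (EuclideanSpace ℝ (Fin n))) :
    JE D (fun x => max (u x) (w x)) + JE D (fun x => min (u x) (w x)) = JE D u + JE D w := by
  have hmax := hu.max hw
  have hmin := hu.min hw
  unfold JE
  rw [← lintegral_add_left (measurable_energy_density hmax.continuous),
    ← lintegral_add_left (measurable_energy_density hu.continuous)]
  refine lintegral_congr_ae (ae_restrict_of_ae ?_)
  filter_upwards [ae_gradient_eq_of_eq hmax hu, ae_gradient_eq_of_eq hmax hw,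
    ae_gradient_eq_of_eq hmin hu, ae_gradient_eq_of_eq hmin hw] with x hmaxu hmaxw hminu hminw
  rcases le_total (u x) (w x) with h | h
  · simp only [hmaxw (max_eq_right h), hminu (min_eq_left h), max_eq_right h, min_eq_left h]
    rw [add_comm]
  · simp only [hmaxu (max_eq_left h), hminw (min_eq_right h), max_eq_left h, min_eq_right h]

lemma JE_le_JE_iff_of_ne_subset (hu : LocallyLipschitz u) (hv : LocallyLipschitz v)
    (hD : Bornology.IsBounded D) (hne : {x | v x ≠ u x} ⊆ D) :
    JE D u ≤ JE D v ↔ JE {x | v x ≠ u x} u ≤ JE {x | v x ≠ u x} v := by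
  have hmeas : MeasurableSet {x | v x ≠ u x} :=
    (isOpen_ne_fun hv.continuous hu.continuous).measurableSet
  have hrest : JE (D \ {x | v x ≠ u x}) v = JE (D \ {x | v x ≠ u x}) u :=
    JE_congr hv hu fun x hx => not_not.mp hx.2
  rw [← JE_inter_add_sdiff D hmeas u, ← JE_inter_add_sdiff D hmeas v, hrest,
    inter_eq_self_of_subset_right hne,
    ENNReal.add_le_add_iff_right (JE_ne_top hu (hD.subset sdiff_subset))]

lemma isMinimizer_iff : IsMinimizer Ω u ↔ (∀ x, 0 ≤ u x) ∧ LocallyLipschitz u ∧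
    ∀ v : EuclideanSpace ℝ (Fin n) → ℝ, (∀ x, 0 ≤ v x) → LocallyLipschitz v →
      Bornology.IsBounded {x | v x ≠ u x} → {x | v x ≠ u x} ⊆ Ω →
      JE {x | v x ≠ u x} u ≤ JE {x | v x ≠ u x} v := by
  refine and_congr_right fun _ => and_congr_right fun hu => forall_congr' fun v =>
    forall₄_congr fun _ hv hb hΩ => ?_
  have hball : ∀ c r, {x | v x ≠ u x} ⊆ ball c r → (JE (Ω ∩ ball c r) u ≤ JE (Ω ∩ ball c r) v ↔
      JE {x | v x ≠ u x} u ≤ JE {x | v x ≠ u x} v) := fun c r hcr =>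
    JE_le_JE_iff_of_ne_subset hu hv (isBounded_ball.subset inter_subset_right)
      (subset_inter hΩ hcr)
  obtain ⟨r, hr⟩ := hb.subset_ball 0
  exact ⟨fun h => (hball 0 r hr).mp (h 0 r hr), fun h c r hcr => (hball c r hcr).mpr h⟩

namespace IsMinimizer

lemma nonneg (hu : IsMinimizer Ω u) (x : EuclideanSpace ℝ (Fin n)) : 0 ≤ u x := hu.1 x

lemma locallyLipschitz (hu : IsMinimizer Ω u) : LocallyLipschitz u := hu.2.1

lemma continuous (hu : IsMinimizer Ω u) : Continuous u := hu.locallyLipschitz.continuous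

lemma JE_le_JE (hu : IsMinimizer Ω u) (hv₀ : ∀ x, 0 ≤ v x) (hv : LocallyLipschitz v)
    (hD : Bornology.IsBounded D) (hne : {x | v x ≠ u x} ⊆ D) (hΩ : {x | v x ≠ u x} ⊆ Ω) :
    JE D u ≤ JE D v :=
  (JE_le_JE_iff_of_ne_subset hu.locallyLipschitz hv hD hne).mpr
    ((isMinimizer_iff.mp hu).2.2 v hv₀ hv (hD.subset hne) hΩ)

lemma extend (hu : IsMinimizer Ω' u) (hw : IsMinimizer Ω w) (hΩ : Bornology.IsBounded Ω)
    (hΩΩ' : Ω ⊆ Ω') (hbd : ∀ x ∉ Ω, w x = u x) : IsMinimizer Ω' w := by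
  refine isMinimizer_iff.mpr ⟨hw.nonneg, hw.locallyLipschitz, fun v hv₀ hv hb hvΩ' => ?_⟩
  have hne : {x | u x ≠ w x} ⊆ Ω := fun x hx => of_not_not fun hxΩ => hx (hbd x hxΩ).symm
  have hvu : {x | v x ≠ u x} ⊆ Ω ∪ {x | v x ≠ w x} := fun x hx =>
    or_iff_not_imp_left.mpr fun hxΩ => by rwa [mem_ofPred_eq, hbd x hxΩ]
  have hbU : Bornology.IsBounded (Ω ∪ {x | v x ≠ w x}) := hΩ.union hb
  rw [← JE_le_JE_iff_of_ne_subset hw.locallyLipschitz hv hbU subset_union_right]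
  calc JE (Ω ∪ {x | v x ≠ w x}) w ≤ JE (Ω ∪ {x | v x ≠ w x}) u :=
        hw.JE_le_JE hu.nonneg hu.locallyLipschitz hbU (hne.trans subset_union_left) hne
    _ ≤ JE (Ω ∪ {x | v x ≠ w x}) v :=
        hu.JE_le_JE hv₀ hv hbU hvu (hvu.trans (union_subset hΩΩ' hvΩ'))

protected lemma max (hu : IsMinimizer Ω u) (hw : IsMinimizer Ω w)
    (hb : Bornology.IsBounded {x | w x ≠ u x}) (hΩ : {x | w x ≠ u x} ⊆ Ω) :
    IsMinimizer Ω fun x => max (u x) (w x) := by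
  have hul := hu.locallyLipschitz
  have hwl := hw.locallyLipschitz
  refine isMinimizer_iff.mpr ⟨fun x => le_max_of_le_left (hu.nonneg x), hul.max hwl,
    fun v hv₀ hv hbv hvΩ => ?_⟩
  set D := {x | w x ≠ u x} ∪ {x | v x ≠ max (u x) (w x)}
  have hD : Bornology.IsBounded D := hb.union hbv
  have hmin : {x | min (u x) (w x) ≠ u x} ⊆ {x | w x ≠ u x} := fun x hx heq =>
    hx (by rw [heq, min_self])
  have hvw : {x | v x ≠ w x} ⊆ D := fun x hx => or_iff_not_imp_left.mpr fun heq => by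
    rwa [mem_ofPred_eq, ← not_not.mp heq, max_self]
  rw [← JE_le_JE_iff_of_ne_subset (hul.max hwl) hv hD subset_union_right]
  have hJmin : JE D u ≤ JE D fun x => min (u x) (w x) :=
    hu.JE_le_JE (fun x => le_min (hu.nonneg x) (hw.nonneg x)) (hul.min hwl) hD
      (hmin.trans subset_union_left) (hmin.trans hΩ)
  have hJw : JE D w ≤ JE D v := hw.JE_le_JE hv₀ hv hD hvw (hvw.trans (union_subset hΩ hvΩ))
  refine (ENNReal.add_le_add_iff_left (JE_ne_top (hul.min hwl) hD)).mp ?_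
  calc (JE D fun x => min (u x) (w x)) + JE D (fun x => max (u x) (w x))
    _ = JE D u + JE D w := by rw [add_comm, JE_max_add_JE_min hul hwl]
    _ ≤ (JE D fun x => min (u x) (w x)) + JE D v := add_le_add hJmin hJw

-- The weak form of `Δ u = 0`: a positive `u` stays positive under `u + t φ` for small `t`, so only
-- the Dirichlet part of the energy varies.
lemma setIntegral_inner_gradient_eq_zero (hu : IsMinimizer Ω u) {φ : EuclideanSpace ℝ (Fin n) → ℝ}
    (hφ : LocallyLipschitz φ) {K : Set (EuclideanSpace ℝ (Fin n))} (hK : IsCompact K)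
    (hφK : Function.support φ ⊆ K) (hKΩ : K ⊆ Ω) (hpos : ∀ x ∈ K, 0 < u x) :
    ∫ x in K, ⟪∇ u x, ∇ φ x⟫ = 0 := by
  have hul := hu.locallyLipschitz
  have hv (t : ℝ) : LocallyLipschitz fun x => u x + t * φ x :=
    hul.add ((lipschitzWith_smul t).locallyLipschitz.comp hφ)
  have hposv : ∀ᶠ t in 𝓝 (0 : ℝ), ∀ x ∈ K, 0 < u x + t * φ x := by
    refine hK.eventually_forall_of_forall_eventually fun x hx => ?_
    have hcont : Continuous fun p : ℝ × EuclideanSpace ℝ (Fin n) => u p.2 + p.1 * φ p.2 :=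
      (hul.continuous.comp continuous_snd).add
        (continuous_fst.mul (hφ.continuous.comp continuous_snd))
    refine hcont.continuousAt.eventually_const_lt ?_
    simpa using hpos x hx
  have hquad : ∀ᶠ t in 𝓝 (0 : ℝ), 0 ≤ t * (2 * ∫ x in K, ⟪∇ u x, ∇ φ x⟫)
      + t ^ 2 * ∫ x in K, ‖∇ φ x‖ ^ 2 := by
    filter_upwards [hposv] with t ht
    have hne : {x | u x + t * φ x ≠ u x} ⊆ K := fun x hx => hφK fun hφx => hx (by simp [hφx])
    have hv₀ (x) : 0 ≤ u x + t * φ x := by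
      by_cases hx : x ∈ K
      · exact (ht x hx).le
      · exact (hu.nonneg x).trans_eq (not_not.mp fun h => hx (hne (Ne.symm h)))
    have hJ := hu.JE_le_JE hv₀ (hv t) hK.isBounded hne (hne.trans hKΩ)
    rw [JE_eq_ofReal_add_volume hul hK.isBounded hK.measurableSet hpos,
      JE_eq_ofReal_add_volume (hv t) hK.isBounded hK.measurableSet ht,
      ENNReal.add_le_add_iff_right hK.measure_lt_top.ne,
      ENNReal.ofReal_le_ofReal_iff (integral_nonneg fun x => by positivity),
      setIntegral_norm_gradient_add_mul_sq hul hφ hK.isBounded] at hJ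
    linarith
  linarith [eq_zero_of_eventually_nonneg_mul_add_sq_mul hquad]

lemma setIntegral_closedBall_inner_gradient_sub_eq_zero (hu : IsMinimizer Ω u)
    {x₀ : EuclideanSpace ℝ (Fin n)} {r : ℝ} (hr : 0 ≤ r) (hΩ : closedBall x₀ r ⊆ Ω)
    (hpos : ∀ x ∈ closedBall x₀ r, 0 < u x) :
    ∫ x in closedBall x₀ r, ⟪∇ u x, x - x₀⟫ = 0 := by
  rw [← neg_eq_zero, ← integral_neg, ← hu.setIntegral_inner_gradient_eq_zero
    (locallyLipschitz_truncatedParaboloid x₀ r) (isCompact_closedBall x₀ r)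
    (support_truncatedParaboloid_subset x₀ hr) hΩ hpos]
  refine setIntegral_congr_ae measurableSet_closedBall ?_
  filter_upwards [ae_gradient_truncatedParaboloid x₀ r] with x hgrad hx
  rw [hgrad hx, inner_neg_right]

lemma hasMeanValueAt (hu : IsMinimizer Ω u) (hΩ : IsOpen Ω) {x : EuclideanSpace ℝ (Fin n)}
    (hx : x ∈ Ω) (hpos : 0 < u x) : HasMeanValueAt volume u x := by
  obtain ⟨ρ, hρ, hball⟩ := Metric.eventually_nhds_iff_ball.mp
    ((hΩ.eventually_mem hx).and (hu.continuous.continuousAt.eventually_const_lt hpos))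
  refine hasMeanValueAt_of_forall_setIntegral_inner_eq_zero hu.locallyLipschitz hρ fun r hr => ?_
  have hsub := closedBall_subset_ball (x := x) hr.2
  exact hu.setIntegral_closedBall_inner_gradient_sub_eq_zero hr.1.le
    (fun y hy => (hball y (hsub hy)).1) fun y hy => (hball y (hsub hy)).2

lemma eventuallyEq_of_eq (hu : IsMinimizer Ω u) (hw : IsMinimizer Ω w) (hΩ : IsOpen Ω)
    (hb : Bornology.IsBounded {x | w x ≠ u x}) (hne : {x | w x ≠ u x} ⊆ Ω)
    {x : EuclideanSpace ℝ (Fin n)} (hx : x ∈ Ω) (hpos : 0 < u x) (heq : u x = w x) :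
    u =ᶠ[𝓝 x] w := by
  have hm := hu.max hw hb hne
  have hmx := hm.hasMeanValueAt hΩ hx (lt_max_of_lt_left hpos)
  have hum := (hu.hasMeanValueAt hΩ hx hpos).eventuallyEq_of_le hmx hu.continuous hm.continuous
    (.of_forall fun _ => le_max_left _ _) (by rw [← heq, max_self])
  have hwm := (hw.hasMeanValueAt hΩ hx (heq ▸ hpos)).eventuallyEq_of_le hmx hw.continuous
    hm.continuous (.of_forall fun _ => le_max_right _ _) (by rw [heq, max_self])
  exact hum.trans hwm.symm

lemma eq_empty_of_forall_frontier_eq_zero (hu : IsMinimizer Ω u)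
    {E : Set (EuclideanSpace ℝ (Fin n))} (hE : IsOpen E) (hb : Bornology.IsBounded E)
    (hEΩ : E ⊆ Ω) (hpos : ∀ x ∈ E, 0 < u x) (hfr : ∀ x ∈ frontier E, u x = 0) : E = ∅ := by
  have hv : LocallyLipschitz (Eᶜ.indicator u) :=
    locallyLipschitz_indicator hu.locallyLipschitz (by rwa [frontier_compl])
  have hne : {x | Eᶜ.indicator u x ≠ u x} ⊆ E := fun x hx =>
    of_not_not fun hxE => hx (indicator_of_mem hxE u)
  have hJv : JE E (Eᶜ.indicator u) = 0 := by
    have hzero : EqOn (Eᶜ.indicator u) (fun _ => 0) E := fun x hx =>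
      indicator_of_notMem (not_not.mpr hx) u
    rw [JE_congr hv (LipschitzWith.const 0).locallyLipschitz hzero]
    simp [JE]
  have hvol : volume E ≤ 0 := calc
    volume E ≤ JE E u := by
      rw [JE_eq_ofReal_add_volume hu.locallyLipschitz hb hE.measurableSet hpos]
      exact le_add_self
    _ ≤ JE E (Eᶜ.indicator u) :=
      hu.JE_le_JE (indicator_nonneg fun x _ => hu.nonneg x) hv hb hne (hne.trans hEΩ)
    _ = 0 := hJv
  exact hE.measure_eq_zero_iff volume |>.mp (le_zero_iff.mp hvol)

lemma eq_of_pos (hu : IsMinimizer Ω u) (hw : IsMinimizer Ω w) (hΩ : IsOpen Ω)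
    (hb : Bornology.IsBounded {x | w x ≠ u x}) (hne : closure {x | w x ≠ u x} ⊆ Ω)
    {x : EuclideanSpace ℝ (Fin n)} (hpos : 0 < u x) : w x = u x := by
  have hEo : IsOpen ({x | 0 < u x} ∩ {x | w x ≠ u x}) :=
    (isOpen_lt continuous_const hu.continuous).inter
      (isOpen_ne_fun hw.continuous hu.continuous)
  have hfr : ∀ z ∈ frontier ({x | 0 < u x} ∩ {x | w x ≠ u x}), u z = 0 := by
    intro z hz
    rw [hEo.frontier_eq] at hz
    by_contra hz₀
    have hzpos : 0 < u z := (hu.nonneg z).lt_of_ne' hz₀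
    have hzcl : z ∈ closure {x | w x ≠ u x} := closure_mono inter_subset_right hz.1
    have heq : w z = u z := not_not.mp fun h => hz.2 ⟨hzpos, h⟩
    exact mem_closure_iff_frequently.mp hzcl <|
      (hu.eventuallyEq_of_eq hw hΩ hb (subset_closure.trans hne) (hne hzcl) hzpos heq.symm).mono
        fun y hy => not_not.mpr hy.symm
  have hempty := hu.eq_empty_of_forall_frontier_eq_zero hEo (hb.subset inter_subset_right)
    (inter_subset_right.trans (subset_closure.trans hne)) (fun x hx => hx.1) hfr
  exact not_not.mp fun h => (hempty ▸ ⟨hpos, h⟩ : x ∈ (∅ : Set _))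

end IsMinimizer

end Energy

theorem stmt3_general {n : ℕ} {Ω Ω' : Set (EuclideanSpace ℝ (Fin n))}
    {u w : EuclideanSpace ℝ (Fin n) → ℝ} (hu : IsMinimizer Ω' u) (hw : IsMinimizer Ω w)
    (hΩ' : IsOpen Ω') (hΩ : Bornology.IsBounded Ω) (hΩΩ' : closure Ω ⊆ Ω')
    (hbd : ∀ x ∉ Ω, w x = u x) : w = u := by
  have hw' : IsMinimizer Ω' w := hu.extend hw hΩ (subset_closure.trans hΩΩ') hbd
  have hne : {x | w x ≠ u x} ⊆ Ω := fun x hx => of_not_not fun hxΩ => hx (hbd x hxΩ)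
  have hne' : closure {x | w x ≠ u x} ⊆ Ω' := (closure_mono hne).trans hΩΩ'
  funext x
  rcases (hu.nonneg x).lt_or_eq with hux | hux
  · exact hu.eq_of_pos hw' hΩ' (hΩ.subset hne) hne' hux
  rcases (hw.nonneg x).lt_or_eq with hwx | hwx
  · simp only [ne_comm (a := w _)] at hne hne'
    exact (hw'.eq_of_pos hu hΩ' (hΩ.subset hne) hne' hwx).symm
  · exact hwx.symm.trans hux

/-- uniqueness of the minimizer with boundary data `U₀`. -/
theorem stmt3 {n : ℕ} (hn : 2 ≤ n) (U₀ : EuclideanSpace ℝ (Fin n) → ℝ)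
    (hU₀min : IsMinimizer (Set.univ : Set (EuclideanSpace ℝ (Fin n))) U₀)
    (hU₀ne : U₀ ≠ 0)
    (hU₀hom : ∀ t : ℝ, 0 < t → ∀ x, U₀ (t • x) = t * U₀ x)
    (w : EuclideanSpace ℝ (Fin n) → ℝ)
    (hw : IsMinimizer (Metric.ball (0 : EuclideanSpace ℝ (Fin n)) 1) w)
    (hbd : ∀ x ∉ Metric.ball (0 : EuclideanSpace ℝ (Fin n)) 1, w x = U₀ x) :
    ∀ x, w x = U₀ x :=
  congrFun (stmt3_general hU₀min hw isOpen_univ isBounded_ball (subset_univ _) hbd)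
end
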